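/- arXiv:2203.06268 — 2 statements merged into one kernel-verified Lean document; each statement's English description precedes it below -/
import Mathlib

section
/- The limit lim_{n→∞} (C(n)/n!)^{1/n} exists and equals c. (This resolves Pomerance's conjecture that C(n) = n!·(c + o(1))^n for some constant c.) -/
open Real Filter

/-- `C(n)`: the number of coprime permutations of `{1, …, n}`,
i.e. permutations `σ` with `gcd(m, σ(m)) = 1` for all `m ∈ {1, …, n}`. -/
noncomputable def coprimePermCount (n : ℕ) : ℕ :=
  Nat.card {σ : Equiv.Perm (Fin n) // ∀ m : Fin n, Nat.gcd (m.1 + 1) ((σ m).1 + 1) = 1}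

/-- The constant `c = ∏_p (p-1)^{2(1-1/p)} / (p · (p-2)^{1-2/p})`, where the factor at
`p = 2` is `1/2` (real powers, with `(0:ℝ) ^ (0:ℝ) = 1`). -/
noncomputable def coprimeConst : ℝ :=
  ∏' p : Nat.Primes,
    (((p : ℕ) : ℝ) - 1) ^ (2 * (1 - 1 / ((p : ℕ) : ℝ))) /
      (((p : ℕ) : ℝ) * (((p : ℕ) : ℝ) - 2) ^ (1 - 2 / ((p : ℕ) : ℝ)))

/-!
Coprimality of `m` and `σ m` is tested prime by prime. Fix a finite set `P` of primes and colour
`{1, …, n}` by the residues modulo the primes of `P`. A coprime permutation never sends a number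
divisible by `p ∈ P` to a number divisible by `p`. Subject to this restriction, the entropy of the
table of transitions between colours is maximal at the product over `p ∈ P` of the tables on
`ZMod p` with equal marginals whose entries at `(s, t) ≠ (0, 0)` have the form `w s * w t`; this
maximum contributes the factor of `coprimeConst` at each `p ∈ P`. Weighting by `w` gives the upper
bound for every fixed `P`.

For the lower bound, `P` consists of the primes up to `K ≈ (log₂ n) / 16`. A permutation `θ`
realising the optimal table is randomised to `b * θ * a` with `a` and `b` preserving all colours.
The remaining obstructions are common prime factors exceeding `K`, which are sparse: exponential
moments show that for at least half of the `a` few choices of `b` are forbidden at each place, and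
then the conflicting pairs are removed one at a time by exchanging two values of `b`, which costs
only a factor `exp (o(n))`.
-/

namespace CoprimePerm

open Finset

section Fibers

variable {α ι κ : Type*} [Fintype α] [DecidableEq ι] [DecidableEq κ]

/-- The fibre of a colouring `τ` over the colour `s`. -/
def fiber (τ : α → ι) (s : ι) : Finset α := {x | τ x = s}

@[simp] lemma mem_fiber {τ : α → ι} {s : ι} {x : α} : x ∈ fiber τ s ↔ τ x = s := by
  simp [fiber]

lemma card_fiber_pos (τ : α → ι) (x : α) : 0 < #(fiber τ (τ x)) :=
  card_pos.2 ⟨x, mem_fiber.2 rfl⟩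

lemma sum_card_fiber [Fintype ι] (τ : α → ι) : ∑ r, #(fiber τ r) = Fintype.card α :=
  (card_eq_sum_card_fiberwise fun _ _ => mem_univ _).symm

lemma sum_comp_eq_sum_card_fiber_mul [Fintype ι] (τ : α → ι) (f : ι → ℝ) :
    ∑ x, f (τ x) = ∑ r, #(fiber τ r) * f r := by
  simpa only [nsmul_eq_mul] using (sum_fiberwise' univ τ f).symm.trans (by simp [fiber])

lemma card_fiber_comp [Fintype κ] (f : α → κ) (g : κ → ι) (r : ι) :
    #(fiber (g ∘ f) r) = ∑ k with g k = r, #(fiber f k) := by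
  rw [card_eq_sum_card_fiberwise (f := f) (t := {k | g k = r}) fun x hx => by simpa using hx]
  refine sum_congr rfl fun k hk => congrArg card ?_
  ext x
  have hk : g k = r := (mem_filter.1 hk).2
  simp only [mem_filter, mem_fiber, Function.comp_apply, and_iff_right_iff_imp]
  rintro rfl
  exact hk

lemma card_fiber_comp_perm (f : α → κ) (ρ₁ : Equiv.Perm α) (k : κ) :
    #(fiber (f ∘ ρ₁) k) = #(fiber f k) :=
  card_equiv ρ₁ fun x => by simp

lemma exists_card_fiber_eq [Fintype κ] (ν : κ → ℕ) (hν : ∑ k, ν k = Fintype.card α) :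
    ∃ f : α → κ, ∀ k, #(fiber f k) = ν k := by
  let e : α ≃ Σ k, Fin (ν k) := Fintype.equivOfCardEq (by simp [hν])
  refine ⟨fun x => (e x).1, fun k => ?_⟩
  rw [fiber, ← Fintype.card_subtype,
    Fintype.card_congr ((e.subtypeEquiv fun _ => Iff.rfl).trans (Equiv.sigmaSubtype k)),
    Fintype.card_fin]

lemma exists_perm_comp_eq {f g : α → κ} (h : ∀ k, #(fiber f k) = #(fiber g k)) :
    ∃ ρ₁ : Equiv.Perm α, f ∘ ρ₁ = g := by
  let e (k : κ) : {x // g x = k} ≃ {x // f x = k} :=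
    Fintype.equivOfCardEq (by simpa only [Fintype.card_subtype, fiber] using (h k).symm)
  exact ⟨Equiv.ofFiberEquiv e, funext fun x => Equiv.ofFiberEquiv_map e x⟩

lemma exists_perm_card_fiber_pair_eq [Fintype ι] (τ : α → ι) (N : ι → ι → ℕ)
    (hrow : ∀ r, ∑ s, N r s = #(fiber τ r)) (hcol : ∀ s, ∑ r, N r s = #(fiber τ s)) :
    ∃ θ : Equiv.Perm α, ∀ r s, #(fiber (fun x => (τ x, τ (θ x))) (r, s)) = N r s := by
  obtain ⟨f, hf⟩ := exists_card_fiber_eq (α := α) (fun q : ι × ι => N q.1 q.2) <| by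
    simp only [Fintype.sum_prod_type, hrow, sum_card_fiber]
  obtain ⟨ρ₁, hρ₁⟩ := exists_perm_comp_eq (f := Prod.fst ∘ f) (g := τ) fun r => by
    simp only [card_fiber_comp, hf, sum_filter, Fintype.sum_prod_type_right]
    simp [hrow]
  obtain ⟨ρ₂, hρ₂⟩ := exists_perm_comp_eq (f := Prod.snd ∘ f) (g := τ) fun s => by
    simp only [card_fiber_comp, hf, sum_filter, Fintype.sum_prod_type]
    simp [hcol]
  refine ⟨ρ₂⁻¹ * ρ₁, fun r s => ?_⟩
  have hpair : (fun x => (τ x, τ ((ρ₂⁻¹ * ρ₁) x))) = f ∘ ρ₁ := by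
    funext x
    refine Prod.ext (congrFun hρ₁ x).symm ?_
    simpa using (congrFun hρ₂ (ρ₂⁻¹ (ρ₁ x))).symm
  rw [hpair, card_fiber_comp_perm, hf]

end Fibers

section FiberPerms

variable {α ι : Type*} [Fintype α] [DecidableEq α] [DecidableEq ι]

/-- The permutations of `α` that preserve every fibre of `τ`. -/
def fiberPerms (τ : α → ι) : Finset (Equiv.Perm α) := {β | ∀ x, τ (β x) = τ x}

@[simp] lemma mem_fiberPerms {τ : α → ι} {β : Equiv.Perm α} :
    β ∈ fiberPerms τ ↔ ∀ x, τ (β x) = τ x := by simp [fiberPerms]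

lemma card_fiberPerms [Fintype ι] (τ : α → ι) :
    #(fiberPerms τ) = ∏ s, (#(fiber τ s)).factorial := by
  rw [show fiberPerms τ = ({g | τ ∘ g = τ} : Finset (Equiv.Perm α)) by ext; simp [funext_iff]]
  simpa only [Fintype.card_subtype, fiber] using DomMulAct.stabilizer_card τ

lemma card_fiberPerms_pos (τ : α → ι) : 0 < #(fiberPerms τ) :=
  card_pos.2 ⟨1, mem_fiberPerms.2 fun _ => rfl⟩

lemma mul_mem_fiberPerms {τ : α → ι} {β γ : Equiv.Perm α} (hβ : β ∈ fiberPerms τ)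
    (hγ : γ ∈ fiberPerms τ) : β * γ ∈ fiberPerms τ :=
  mem_fiberPerms.2 fun x => (mem_fiberPerms.1 hβ _).trans (mem_fiberPerms.1 hγ x)

lemma swap_mem_fiberPerms {τ : α → ι} {x y : α} (hxy : τ x = τ y) :
    Equiv.swap x y ∈ fiberPerms τ :=
  mem_fiberPerms.2 fun z => by
    rw [Equiv.swap_apply_def]
    split_ifs <;> simp_all

end FiberPerms

section Switching

variable {α ι : Type*} [Fintype α] [DecidableEq α] [DecidableEq ι]

/-- The fibre-preserving permutations whose graph is disjoint from `E`. -/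
def avoiding (τ : α → ι) (E : Finset (α × α)) : Finset (Equiv.Perm α) :=
  {β ∈ fiberPerms τ | ∀ x, (x, β x) ∉ E}

/-- The points `w'` in the fibre of `w` such that exchanging the values of `β` at `w` and `w'`
creates no pair of `F` at these two points. -/
def switchPartners (τ : α → ι) (F : Finset (α × α)) (β : Equiv.Perm α) (w : α) : Finset α :=
  {w' ∈ fiber τ (τ w) | (w, β w') ∉ F ∧ (w', β w) ∉ F}

lemma le_card_switchPartners {τ : α → ι} {F : Finset (α × α)} {D Δ : ℕ} {β : Equiv.Perm α} {w : α}
    (hrow : #{x | (w, x) ∈ F} ≤ D) (hcol : #{w' | (w', β w) ∈ F} ≤ D)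
    (hfib : Δ + 2 * D ≤ #(fiber τ (τ w))) : Δ ≤ #(switchPartners τ F β w) := by
  have hcover : fiber τ (τ w) ⊆
      switchPartners τ F β w ∪
        (({w' | (w, β w') ∈ F} : Finset α) ∪ ({w' | (w', β w) ∈ F} : Finset α)) := fun x hx => by
    simp only [switchPartners, mem_union, mem_filter, mem_univ, true_and]
    tauto
  have hrow' : #{w' | (w, β w') ∈ F} ≤ D :=
    (card_equiv β (t := {x | (w, x) ∈ F}) fun x => by simp).trans_le hrow
  have hcard := (card_le_card hcover).trans
    ((card_union_le _ _).trans (Nat.add_le_add_left (card_union_le _ _) _))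
  omega

lemma mul_swap_mem_avoiding {τ : α → ι} {E : Finset (α × α)} {β : Equiv.Perm α} {w w' : α}
    (hβ : β ∈ avoiding τ E) (hw' : w' ∈ switchPartners τ (insert (w, β w) E) β w) :
    β * Equiv.swap w w' ∈ avoiding τ (insert (w, β w) E) := by
  obtain ⟨hβτ, hβE⟩ := mem_filter.1 hβ
  obtain ⟨hfib, hnew, hnew'⟩ := mem_filter.1 hw'
  refine mem_filter.2
    ⟨mul_mem_fiberPerms hβτ (swap_mem_fiberPerms (mem_fiber.1 hfib).symm), fun x => ?_⟩
  rw [Equiv.Perm.mul_apply]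
  rcases eq_or_ne x w with rfl | hx
  · rwa [Equiv.swap_apply_left]
  rcases eq_or_ne x w' with rfl | hx'
  · rwa [Equiv.swap_apply_right]
  rw [Equiv.swap_apply_of_ne_of_ne hx hx', mem_insert, not_or]
  exact ⟨fun h => hx (Prod.ext_iff.1 h).1, hβE x⟩

lemma mul_card_filter_avoiding_le {τ : α → ι} {D Δ : ℕ} {E : Finset (α × α)} {w v : α}
    (hrow : #{x | (w, x) ∈ insert (w, v) E} ≤ D) (hcol : #{w' | (w', v) ∈ insert (w, v) E} ≤ D)
    (hfib : Δ + 2 * D ≤ #(fiber τ (τ w))) :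
    Δ * #{β ∈ avoiding τ E | β w = v} ≤ #(avoiding τ (insert (w, v) E)) := by
  calc Δ * #{β ∈ avoiding τ E | β w = v}
      ≤ ∑ β ∈ avoiding τ E with β w = v, #(switchPartners τ (insert (w, v) E) β w) := by
        rw [mul_comm, ← smul_eq_mul]
        refine card_nsmul_le_sum _ _ Δ fun β hβ => ?_
        obtain ⟨-, rfl⟩ := mem_filter.1 hβ
        exact le_card_switchPartners hrow hcol hfib
    _ = #(Finset.sigma {β ∈ avoiding τ E | β w = v}
          fun β => switchPartners τ (insert (w, v) E) β w) := (card_sigma _ _).symm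
    _ ≤ #(avoiding τ (insert (w, v) E)) := by
        refine card_le_card_of_injOn (fun q => q.1 * Equiv.swap w q.2) ?_ ?_
        · rintro ⟨β, w'⟩ hq
          simp only [coe_sigma, Set.mem_sigma_iff, mem_coe, mem_filter] at hq
          obtain ⟨⟨hβ, rfl⟩, hw'⟩ := hq
          exact mul_swap_mem_avoiding hβ hw'
        · rintro ⟨β, x⟩ hq ⟨γ, y⟩ hq' h
          simp only [coe_sigma, Set.mem_sigma_iff, mem_coe, mem_filter] at hq hq' h
          -- the partner is recovered from the product as the preimage of `v`
          obtain rfl : x = y := (β * Equiv.swap w x).injective <| by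
            nth_rw 2 [h]
            simp [hq.1.2, hq'.1.2]
          rw [mul_left_inj] at h
          rw [h]

lemma card_avoiding_eq_add (τ : α → ι) (E : Finset (α × α)) (w v : α) :
    #(avoiding τ E) = #{β ∈ avoiding τ E | β w = v} + #(avoiding τ (insert (w, v) E)) := by
  rw [← card_filter_add_card_filter_not (s := avoiding τ E) fun β => β w = v]
  congr 2
  ext β
  simp only [avoiding, mem_filter, mem_insert, not_or, Prod.mk.injEq, not_and]
  constructor
  · rintro ⟨⟨hβ, hE⟩, hne⟩
    exact ⟨hβ, fun x => ⟨by rintro rfl; exact hne, hE x⟩⟩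
  · rintro ⟨hβ, h⟩
    exact ⟨⟨hβ, fun x => (h x).2⟩, (h w).1 rfl⟩

lemma card_fiberPerms_le_card_avoiding_mul_exp {τ : α → ι} {D Δ : ℕ} {E : Finset (α × α)}
    (hΔ : 0 < Δ) (hrow : ∀ w, #{x | (w, x) ∈ E} ≤ D) (hcol : ∀ x, #{w | (w, x) ∈ E} ≤ D)
    (hfib : ∀ x, Δ + 2 * D ≤ #(fiber τ (τ x))) :
    (#(fiberPerms τ) : ℝ) ≤ #(avoiding τ E) * Real.exp (#E / Δ) := by
  induction E using Finset.induction_on with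
  | empty => simp [avoiding]
  | insert e E he ih =>
    obtain ⟨w, v⟩ := e
    have hmono (p : α → α × α) : #{x | p x ∈ E} ≤ #{x | p x ∈ insert (w, v) E} :=
      card_le_card (monotone_filter_right _ fun _ _ h => mem_insert_of_mem h)
    have hswitch : (Δ : ℝ) * #{β ∈ avoiding τ E | β w = v} ≤ #(avoiding τ (insert (w, v) E)) :=
      mod_cast mul_card_filter_avoiding_le (hrow w) (hcol v) (hfib w)
    have hstep : (#(avoiding τ E) : ℝ) ≤ #(avoiding τ (insert (w, v) E)) * Real.exp (1 / Δ) := by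
      have hΔ' : (0 : ℝ) < Δ := mod_cast hΔ
      rw [mul_comm, ← le_div_iff₀ hΔ'] at hswitch
      calc (#(avoiding τ E) : ℝ)
          = #{β ∈ avoiding τ E | β w = v} + #(avoiding τ (insert (w, v) E)) :=
            mod_cast card_avoiding_eq_add τ E w v
        _ ≤ #(avoiding τ (insert (w, v) E)) / Δ + #(avoiding τ (insert (w, v) E)) := by gcongr
        _ = #(avoiding τ (insert (w, v) E)) * (1 / Δ + 1) := by ring
        _ ≤ _ := by gcongr; exact Real.add_one_le_exp _
    calc (#(fiberPerms τ) : ℝ) ≤ #(avoiding τ E) * Real.exp (#E / Δ) :=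
          ih (fun w => (hmono _).trans (hrow w)) fun x => (hmono _).trans (hcol x)
      _ ≤ #(avoiding τ (insert (w, v) E)) * Real.exp (1 / Δ) * Real.exp (#E / Δ) := by gcongr
      _ = _ := by
          rw [card_insert_of_notMem he, mul_assoc, ← Real.exp_add]
          push_cast
          ring_nf

end Switching

section ExponentialMoments

variable {α ι : Type*} [DecidableEq α] [DecidableEq ι]

lemma card_filter_mem_le_card_filter_swap_mul_mem {a : Equiv.Perm α} {W B : Finset α} {u : α}
    (hu : u ∉ B) (hau : a u ∈ W) (w : α) :
    #{x ∈ B | a x ∈ W} ≤ #{x ∈ B | (Equiv.swap (a u) w * a) x ∈ W} := by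
  refine card_le_card fun x hx => ?_
  rw [mem_filter] at hx ⊢
  refine ⟨hx.1, ?_⟩
  have hne : a x ≠ a u := fun h => hu (a.injective h ▸ hx.1)
  simp only [Equiv.Perm.mul_apply, Equiv.swap_apply_def, hne, if_false]
  split_ifs
  exacts [hau, hx.2]

lemma sum_card_filter_eq_le {α : Type*} {τ : α → ι} (W : Finset α) {B : Finset α} {D : ℕ}
    (hB : ∀ r, #{u ∈ B | τ u = r} ≤ D) : ∑ u ∈ B, #{x ∈ W | τ x = τ u} ≤ #W * D := by
  refine (sum_card_bipartiteAbove_eq_sum_card_bipartiteBelow fun u x => τ x = τ u).trans_le ?_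
  refine (sum_le_card_nsmul W _ D fun x _ => ?_).trans_eq (smul_eq_mul _ _)
  simpa only [bipartiteBelow, eq_comm] using hB (τ x)

variable [Fintype α]

/-- The step of `sum_pow_card_le`: composing with the transpositions that move `a u` through the
fibre of `u` only adds hits of `W`. -/
lemma card_fiber_mul_sum_pow_card_le (τ : α → ι) (W : Finset α) {B : Finset α} {u : α}
    (hu : u ∉ B) {t : ℝ} (ht : 0 ≤ t) :
    (#(fiber τ (τ u)) : ℝ) * ∑ a ∈ fiberPerms τ with a u ∈ W, (1 + t) ^ #{x ∈ B | a x ∈ W} ≤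
      #{x ∈ W | τ x = τ u} * ∑ a ∈ fiberPerms τ, (1 + t) ^ #{x ∈ B | a x ∈ W} := by
  let S : Finset (Equiv.Perm α) := {a ∈ fiberPerms τ | a u ∈ W}
  let g (q : Equiv.Perm α × α) : Equiv.Perm α × α := (Equiv.swap (q.1 u) q.2 * q.1, q.1 u)
  have hg : Function.Injective g := by
    rintro ⟨a, x⟩ ⟨b, y⟩ h
    obtain ⟨h₁, h₂⟩ := Prod.mk.inj h
    obtain rfl : x = y := by simpa using congrArg (fun c : Equiv.Perm α => c u) h₁
    simp only [h₂, mul_right_inj] at h₁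
    rw [h₁]
  have hmaps : (S ×ˢ fiber τ (τ u)).image g ⊆ fiberPerms τ ×ˢ {x ∈ W | τ x = τ u} := by
    refine image_subset_iff.2 fun ⟨a, w⟩ h => ?_
    obtain ⟨haS, hw⟩ := mem_product.1 h
    obtain ⟨ha, hau⟩ := mem_filter.1 haS
    have hτ : τ (a u) = τ u := mem_fiberPerms.1 ha u
    exact mem_product.2 ⟨mul_mem_fiberPerms
      (swap_mem_fiberPerms (hτ.trans (mem_fiber.1 hw).symm)) ha, mem_filter.2 ⟨hau, hτ⟩⟩
  calc (#(fiber τ (τ u)) : ℝ) * ∑ a ∈ S, (1 + t) ^ #{x ∈ B | a x ∈ W}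
      = ∑ q ∈ S ×ˢ fiber τ (τ u), (1 + t) ^ #{x ∈ B | q.1 x ∈ W} := by
        simp only [sum_product, sum_const, nsmul_eq_mul, mul_sum]
    _ ≤ ∑ q ∈ S ×ˢ fiber τ (τ u), (1 + t) ^ #{x ∈ B | (g q).1 x ∈ W} :=
        sum_le_sum fun q hq => pow_le_pow_right₀ (by linarith) <|
          card_filter_mem_le_card_filter_swap_mul_mem hu (mem_filter.1 (mem_product.1 hq).1).2 _
    _ = ∑ q ∈ (S ×ˢ fiber τ (τ u)).image g, (1 + t) ^ #{x ∈ B | q.1 x ∈ W} := by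
        rw [sum_image hg.injOn]
    _ ≤ ∑ q ∈ fiberPerms τ ×ˢ {x ∈ W | τ x = τ u}, (1 + t) ^ #{x ∈ B | q.1 x ∈ W} :=
        sum_le_sum_of_subset_of_nonneg hmaps fun _ _ _ => by positivity
    _ = _ := by simp only [sum_product, sum_const, nsmul_eq_mul, mul_sum]

/-- The number of hits of `W` on `B` under a random fibre-preserving permutation has exponential
moments at most those of a sum of independent indicators with the same means. -/
lemma sum_pow_card_le (τ : α → ι) (W B : Finset α) {t : ℝ} (ht : 0 ≤ t) :
    ∑ a ∈ fiberPerms τ, (1 + t) ^ #{x ∈ B | a x ∈ W} ≤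
      #(fiberPerms τ) * ∏ u ∈ B, (1 + t * (#{x ∈ W | τ x = τ u} / #(fiber τ (τ u)))) := by
  induction B using Finset.induction_on with
  | empty => simp
  | insert u B hu ih =>
    let M : ℝ := ∑ a ∈ fiberPerms τ, (1 + t) ^ #{x ∈ B | a x ∈ W}
    let q : ℝ := #{x ∈ W | τ x = τ u} / #(fiber τ (τ u))
    have hsplit : ∑ a ∈ fiberPerms τ, (1 + t) ^ #{x ∈ insert u B | a x ∈ W} =
        M + t * ∑ a ∈ fiberPerms τ with a u ∈ W, (1 + t) ^ #{x ∈ B | a x ∈ W} := by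
      rw [sum_filter, mul_sum, ← sum_add_distrib]
      refine sum_congr rfl fun a _ => ?_
      rw [filter_insert]
      split_ifs
      · rw [card_insert_of_notMem (by simp [hu]), pow_succ]
        ring
      · simp
    have hstep : ∑ a ∈ fiberPerms τ with a u ∈ W, (1 + t) ^ #{x ∈ B | a x ∈ W} ≤ q * M := by
      rw [div_mul_eq_mul_div, le_div_iff₀ (by exact_mod_cast card_fiber_pos τ u), mul_comm]
      exact card_fiber_mul_sum_pow_card_le τ W hu ht
    calc ∑ a ∈ fiberPerms τ, (1 + t) ^ #{x ∈ insert u B | a x ∈ W}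
        ≤ M + t * (q * M) := by rw [hsplit]; gcongr
      _ = (1 + t * q) * M := by ring
      _ ≤ (1 + t * q) * _ := mul_le_mul_of_nonneg_left ih (by positivity)
      _ = _ := by rw [prod_insert hu]; ring

/-- Markov's inequality for the exponential moments of `sum_pow_card_le`. -/
lemma card_overfull_mul_pow_le {τ : α → ι} (W : Finset α) {B : Finset α} {m D₁ : ℕ} (hm : 0 < m)
    (hfib : ∀ x, m ≤ #(fiber τ (τ x))) (hB : ∀ r, #{u ∈ B | τ u = r} ≤ D₁) {t : ℝ} (ht : 0 ≤ t)
    (D₂ : ℕ) :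
    #{a ∈ fiberPerms τ | D₂ < #{x ∈ B | a x ∈ W}} * (1 + t) ^ D₂ ≤
      #(fiberPerms τ) * Real.exp (t * (#W * D₁ / m)) := by
  have hmean (u : α) : (#{x ∈ W | τ x = τ u} : ℝ) / #(fiber τ (τ u)) ≤
      #{x ∈ W | τ x = τ u} / m := by
    gcongr
    exact_mod_cast hfib u
  calc #{a ∈ fiberPerms τ | D₂ < #{x ∈ B | a x ∈ W}} * (1 + t) ^ D₂
      ≤ ∑ a ∈ fiberPerms τ with D₂ < #{x ∈ B | a x ∈ W}, (1 + t) ^ #{x ∈ B | a x ∈ W} := by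
        rw [← nsmul_eq_mul]
        exact card_nsmul_le_sum _ _ _ fun a ha =>
          pow_le_pow_right₀ (by linarith) (mem_filter.1 ha).2.le
    _ ≤ ∑ a ∈ fiberPerms τ, (1 + t) ^ #{x ∈ B | a x ∈ W} :=
        sum_le_sum_of_subset_of_nonneg (filter_subset _ _) fun _ _ _ => by positivity
    _ ≤ _ := sum_pow_card_le τ W B ht
    _ ≤ #(fiberPerms τ) * ∏ u ∈ B, Real.exp (t * (#{x ∈ W | τ x = τ u} / m)) := by
        gcongr with u
        rw [add_comm]
        exact (add_le_add_left (mul_le_mul_of_nonneg_left (hmean u) ht) _).trans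
          (Real.add_one_le_exp _)
    _ ≤ _ := by
        rw [← Real.exp_sum, ← mul_sum, ← sum_div]
        gcongr
        exact_mod_cast sum_card_filter_eq_le W hB

end ExponentialMoments

section DoubleCosets

variable {α ι : Type*} [Fintype α] [DecidableEq α] [DecidableEq ι]

lemma card_double_coset_eq_le (τ : α → ι) (θ σ : Equiv.Perm α) :
    #{q ∈ fiberPerms τ ×ˢ fiberPerms τ | q.2 * (θ * q.1) = σ} ≤
      #(fiberPerms fun x => (τ x, τ (θ x))) := by
  obtain h | ⟨⟨a₀, b₀⟩, h₀⟩ :=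
    ({q ∈ fiberPerms τ ×ˢ fiberPerms τ | q.2 * (θ * q.1) = σ}).eq_empty_or_nonempty
  · simp [h]
  simp only [mem_filter, mem_product, mem_fiberPerms] at h₀
  refine card_le_card_of_injOn (fun q => q.1 * a₀⁻¹) ?_ ?_
  · rintro ⟨a, b⟩ hq
    simp only [coe_filter, Set.mem_ofPred_eq, mem_product, mem_coe, mem_fiberPerms,
      Prod.mk.injEq] at hq ⊢
    obtain ⟨⟨ha, hb⟩, hσ⟩ := hq
    intro x
    have ha₀ : τ (a₀⁻¹ x) = τ x := by simpa using (h₀.1.1 (a₀⁻¹ x)).symm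
    have hb₀ : b (θ (a (a₀⁻¹ x))) = b₀ (θ x) := by
      simpa using DFunLike.congr_fun (hσ.trans h₀.2.symm) (a₀⁻¹ x)
    exact ⟨(ha _).trans ha₀, by rw [Equiv.Perm.mul_apply, ← hb, hb₀, h₀.1.2]⟩
  · rintro ⟨a, b⟩ hq ⟨a', b'⟩ hq' h
    simp only [coe_filter, Set.mem_ofPred_eq] at hq hq'
    obtain rfl : a = a' := mul_right_cancel h
    rw [mul_right_cancel (hq.2.trans hq'.2.symm)]

lemma card_double_coset_le (τ : α → ι) (θ : Equiv.Perm α) {C : Finset (Equiv.Perm α)}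
    {P : Finset (Equiv.Perm α × Equiv.Perm α)} (hP : P ⊆ fiberPerms τ ×ˢ fiberPerms τ)
    (hC : ∀ q ∈ P, q.2 * (θ * q.1) ∈ C) :
    #P ≤ #(fiberPerms fun x => (τ x, τ (θ x))) * #C :=
  card_le_mul_card_image_of_maps_to (f := fun q => q.2 * (θ * q.1)) hC _ fun σ _ =>
    (card_le_card (filter_subset_filter _ hP)).trans (card_double_coset_eq_le τ θ σ)

/-- The pairs `(w, v)` in a common fibre for which `b w = v` makes `b * σ` send some `u` to a `v`
with `bad u v`. -/
def conflictGraph (τ : α → ι) (bad : α → α → Prop) [DecidableRel bad] (σ : Equiv.Perm α) :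
    Finset (α × α) :=
  {e | τ e.1 = τ e.2 ∧ bad (σ⁻¹ e.1) e.2}

/-- The fibre-preserving permutations `a` for which every column of the conflict graph of `θ * a`
has at most `D` elements. -/
def balanced (τ : α → ι) (bad : α → α → Prop) [DecidableRel bad] (θ : Equiv.Perm α) (D : ℕ) :
    Finset (Equiv.Perm α) :=
  {a ∈ fiberPerms τ | ∀ v, #{w | (w, v) ∈ conflictGraph τ bad (θ * a)} ≤ D}

variable {τ : α → ι} {bad : α → α → Prop} [DecidableRel bad]

lemma not_bad_of_mem_avoiding {σ b : Equiv.Perm α}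
    (hb : b ∈ avoiding τ (conflictGraph τ bad σ)) (u : α) : ¬ bad u ((b * σ) u) := fun hu => by
  obtain ⟨hbτ, hbE⟩ := mem_filter.1 hb
  refine hbE (σ u) (mem_filter.2 ⟨mem_univ _, (mem_fiberPerms.1 hbτ _).symm, ?_⟩)
  simpa using hu

lemma card_conflictGraph_row_le {D : ℕ} (hrow : ∀ u s, #{v ∈ fiber τ s | bad u v} ≤ D)
    (σ : Equiv.Perm α) (w : α) : #{v | (w, v) ∈ conflictGraph τ bad σ} ≤ D := by
  refine (card_le_card fun v hv => ?_).trans (hrow (σ⁻¹ w) (τ w))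
  simp only [conflictGraph, mem_filter, mem_univ, true_and, mem_fiber] at hv ⊢
  exact ⟨hv.1.symm, hv.2⟩

lemma card_conflictGraph_col (θ a : Equiv.Perm α) (v : α) :
    #{w | (w, v) ∈ conflictGraph τ bad (θ * a)} =
      #{x ∈ ({u | bad u v} : Finset α) | a x ∈ ({w | τ (θ w) = τ v} : Finset α)} :=
  card_equiv (θ * a)⁻¹ fun w => by
    simp [conflictGraph, and_comm]

lemma card_le_card_mul_of_row_le {E : Finset (α × α)} {D : ℕ}
    (hrow : ∀ w, #{v | (w, v) ∈ E} ≤ D) : #E ≤ Fintype.card α * D := by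
  calc #E = ∑ w, #{e ∈ E | e.1 = w} := card_eq_sum_card_fiberwise fun _ _ => mem_univ _
    _ ≤ ∑ _w : α, D := sum_le_sum fun w _ => by
        refine (card_le_card_of_injOn Prod.snd (t := {v | (w, v) ∈ E}) ?_ ?_).trans (hrow w)
        · intro e he
          obtain ⟨heE, rfl⟩ := mem_filter.1 (mem_coe.1 he)
          simpa using heE
        · intro e he e' he' h
          exact Prod.ext ((mem_filter.1 he).2.trans (mem_filter.1 he').2.symm) h
    _ = _ := by simp

lemma card_filter_lt_card_conflictGraph_col_mul_le (θ : Equiv.Perm α) {m D₁ D₂ : ℕ} (hm : 0 < m)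
    (hlow : ∀ x, m ≤ #(fiber τ (τ x))) {v : α} (hup : #(fiber τ (τ v)) ≤ 2 * m)
    (hcol : ∀ s, #{u ∈ fiber τ s | bad u v} ≤ D₁) :
    (#{a ∈ fiberPerms τ | D₂ < #{w | (w, v) ∈ conflictGraph τ bad (θ * a)}} : ℝ) * 2 ^ D₂ ≤
      #(fiberPerms τ) * Real.exp (2 * D₁) := by
  have hW : (#{w | τ (θ w) = τ v} : ℝ) ≤ 2 * m :=
    mod_cast (card_equiv θ (t := fiber τ (τ v)) fun w => by simp).trans_le hup
  have hB (r : ι) : #{u ∈ ({u | bad u v} : Finset α) | τ u = r} ≤ D₁ := by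
    simpa only [fiber, filter_filter, and_comm] using hcol r
  have h := card_overfull_mul_pow_le {w | τ (θ w) = τ v} hm hlow hB zero_le_one D₂
  simp only [card_conflictGraph_col]
  rw [one_add_one_eq_two, one_mul] at h
  refine h.trans ?_
  gcongr
  rw [div_le_iff₀ (by positivity)]
  nlinarith [(D₁.cast_nonneg : (0 : ℝ) ≤ D₁)]

lemma card_fiberPerms_le_two_mul_card_balanced (θ : Equiv.Perm α) {m D₁ D₂ : ℕ} (hm : 0 < m)
    (hlow : ∀ x, m ≤ #(fiber τ (τ x))) (hup : ∀ x, #(fiber τ (τ x)) ≤ 2 * m)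
    (hcol : ∀ v s, #{u ∈ fiber τ s | bad u v} ≤ D₁)
    (htail : 2 * Fintype.card α * Real.exp (2 * D₁) ≤ 2 ^ D₂) :
    #(fiberPerms τ) ≤ 2 * #(balanced τ bad θ D₂) := by
  let overfull (v : α) : Finset (Equiv.Perm α) :=
    {a ∈ fiberPerms τ | D₂ < #{w | (w, v) ∈ conflictGraph τ bad (θ * a)}}
  have hhalf : 2 * #(univ.biUnion overfull) ≤ #(fiberPerms τ) := by
    suffices h : 2 * (#(univ.biUnion overfull) : ℝ) * 2 ^ D₂ ≤ #(fiberPerms τ) * 2 ^ D₂ by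
      exact_mod_cast le_of_mul_le_mul_right h (by positivity)
    calc 2 * (#(univ.biUnion overfull) : ℝ) * 2 ^ D₂
        ≤ 2 * (∑ v, (#(overfull v) : ℝ)) * 2 ^ D₂ := by
          gcongr
          exact_mod_cast card_biUnion_le
      _ ≤ 2 * ∑ _v : α, (#(fiberPerms τ) : ℝ) * Real.exp (2 * D₁) := by
          rw [mul_assoc, sum_mul]
          refine mul_le_mul_of_nonneg_left (sum_le_sum fun v _ => ?_) zero_le_two
          exact card_filter_lt_card_conflictGraph_col_mul_le θ hm hlow (hup v) (hcol v)
      _ = #(fiberPerms τ) * (2 * Fintype.card α * Real.exp (2 * D₁)) := by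
          rw [sum_const, card_univ, nsmul_eq_mul]
          ring
      _ ≤ _ := by gcongr
  have hcompl : fiberPerms τ \ univ.biUnion overfull ⊆ balanced τ bad θ D₂ := fun a ha => by
    simp only [overfull, balanced, Finset.mem_sdiff, mem_biUnion, mem_univ, true_and, mem_filter,
      not_exists, not_and, not_lt] at ha ⊢
    exact ⟨ha.1, fun v => ha.2 v ha.1⟩
  have := (le_card_sdiff (univ.biUnion overfull) (fiberPerms τ)).trans (card_le_card hcompl)
  omega

lemma card_fiberPerms_le_card_corrections_mul_exp {θ a : Equiv.Perm α} {Δ D₁ D₂ : ℕ} (hΔ : 0 < Δ)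
    (hD : D₁ ≤ D₂) (hrow : ∀ u s, #{v ∈ fiber τ s | bad u v} ≤ D₁)
    (hfib : ∀ x, Δ + 2 * D₂ ≤ #(fiber τ (τ x))) (ha : a ∈ balanced τ bad θ D₂) :
    (#(fiberPerms τ) : ℝ) ≤ #{b ∈ fiberPerms τ | ∀ u, ¬ bad u ((b * (θ * a)) u)} *
      Real.exp (Fintype.card α * D₂ / Δ) := by
  have hrow' (w : α) := (card_conflictGraph_row_le hrow (θ * a) w).trans hD
  have hsub : avoiding τ (conflictGraph τ bad (θ * a)) ⊆
      {b ∈ fiberPerms τ | ∀ u, ¬ bad u ((b * (θ * a)) u)} := fun b hb =>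
    mem_filter.2 ⟨(mem_filter.1 hb).1, not_bad_of_mem_avoiding hb⟩
  calc (#(fiberPerms τ) : ℝ)
      ≤ #(avoiding τ (conflictGraph τ bad (θ * a))) *
          Real.exp (#(conflictGraph τ bad (θ * a)) / Δ) :=
        card_fiberPerms_le_card_avoiding_mul_exp hΔ hrow' (mem_filter.1 ha).2 hfib
    _ ≤ _ := by
        gcongr
        exact_mod_cast card_le_card_mul_of_row_le hrow'

/-- For half of the `a`, at least a fraction `exp (-n D₂ / Δ)` of the `b` puts `b * (θ * a)` into
`C`, and each element of `C` arises from at most `#(fiberPerms (τ, τ ∘ θ))` pairs `(a, b)`. -/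
lemma sq_card_fiberPerms_le (θ : Equiv.Perm α) {C : Finset (Equiv.Perm α)} {m Δ D₁ D₂ : ℕ}
    (hC : ∀ a ∈ fiberPerms τ, ∀ b ∈ fiberPerms τ, (∀ u, ¬ bad u ((b * (θ * a)) u)) →
      b * (θ * a) ∈ C)
    (hΔ : 0 < Δ) (hΔm : Δ + 2 * D₂ ≤ m) (hD : D₁ ≤ D₂)
    (hlow : ∀ x, m ≤ #(fiber τ (τ x))) (hup : ∀ x, #(fiber τ (τ x)) ≤ 2 * m)
    (hrow : ∀ u s, #{v ∈ fiber τ s | bad u v} ≤ D₁)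
    (hcol : ∀ v s, #{u ∈ fiber τ s | bad u v} ≤ D₁)
    (htail : 2 * Fintype.card α * Real.exp (2 * D₁) ≤ 2 ^ D₂) :
    (#(fiberPerms τ) : ℝ) ^ 2 ≤
      2 * #(fiberPerms fun x => (τ x, τ (θ x))) * #C * Real.exp (Fintype.card α * D₂ / Δ) := by
  let Z (a : Equiv.Perm α) : Finset (Equiv.Perm α) :=
    {b ∈ fiberPerms τ | ∀ u, ¬ bad u ((b * (θ * a)) u)}
  let P : Finset (Equiv.Perm α × Equiv.Perm α) :=
    {q ∈ fiberPerms τ ×ˢ fiberPerms τ | ∀ u, ¬ bad u ((q.2 * (θ * q.1)) u)}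
  have hbalanced : (#(fiberPerms τ) : ℝ) ≤ 2 * #(balanced τ bad θ D₂) :=
    mod_cast card_fiberPerms_le_two_mul_card_balanced θ (by omega) hlow hup hcol htail
  have hZP : ∑ a ∈ balanced τ bad θ D₂, #(Z a) ≤ #P := by
    have hP : #P = ∑ a ∈ fiberPerms τ, #(Z a) := by
      simp only [P, Z, card_filter, sum_product]
    exact hP ▸ sum_le_sum_of_subset (filter_subset _ _)
  have hPC : #P ≤ #(fiberPerms fun x => (τ x, τ (θ x))) * #C :=
    card_double_coset_le τ θ (filter_subset _ _) fun q hq => by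
      obtain ⟨hq, hgood⟩ := mem_filter.1 hq
      exact hC _ (mem_product.1 hq).1 _ (mem_product.1 hq).2 hgood
  calc (#(fiberPerms τ) : ℝ) ^ 2
      ≤ 2 * #(balanced τ bad θ D₂) * #(fiberPerms τ) := by rw [sq]; gcongr
    _ = 2 * ∑ _a ∈ balanced τ bad θ D₂, (#(fiberPerms τ) : ℝ) := by
        rw [sum_const, nsmul_eq_mul, mul_assoc]
    _ ≤ 2 * ∑ a ∈ balanced τ bad θ D₂, #(Z a) * Real.exp (Fintype.card α * D₂ / Δ) := by
        gcongr with a ha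
        exact card_fiberPerms_le_card_corrections_mul_exp hΔ hD hrow
          (fun x => hΔm.trans (hlow x)) ha
    _ = 2 * ((∑ a ∈ balanced τ bad θ D₂, #(Z a) : ℕ) : ℝ) *
          Real.exp (Fintype.card α * D₂ / Δ) := by
        rw [← sum_mul, mul_assoc]
        push_cast
        rfl
    _ ≤ 2 * (#(fiberPerms fun x => (τ x, τ (θ x))) * #C) * Real.exp (Fintype.card α * D₂ / Δ) := by
        gcongr
        exact_mod_cast hZP.trans hPC
    _ = _ := by ring

end DoubleCosets

section Compatible

variable {α ι : Type*} [Fintype α] [DecidableEq ι]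

lemma card_le_card_fiberPerms_mul_card_image [DecidableEq α] (τ : α → ι)
    (A : Finset (Equiv.Perm α)) : #A ≤ #(fiberPerms τ) * #(A.image fun σ x => τ (σ x)) := by
  refine card_le_mul_card_image _ _ fun f _ => ?_
  obtain h | ⟨σ₀, h₀⟩ := ({σ ∈ A | (fun x => τ (σ x)) = f}).eq_empty_or_nonempty
  · simp [h]
  refine card_le_card_of_injOn (fun σ => σ * σ₀⁻¹) (fun σ hσ => ?_) (mul_left_injective _).injOn
  refine mem_fiberPerms.2 fun x => ?_
  simpa using congrFun ((mem_filter.1 hσ).2.trans (mem_filter.1 h₀).2.symm) (σ₀⁻¹ x)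

variable [Fintype ι] {τ : α → ι} {R : ι → ι → Prop} [DecidableRel R] {w : ι → ℝ} {b : ℝ}
  {A : Finset (Equiv.Perm α)}

lemma card_image_mul_exp_le
    (hw : ∀ r, ∑ s with R r s, Real.exp (w s) ≤ Real.exp (b - w r))
    (hA : ∀ σ ∈ A, ∀ x, R (τ x) (τ (σ x))) :
    #(A.image fun σ x => τ (σ x)) * Real.exp (∑ x, w (τ x)) ≤
      Real.exp (Fintype.card α * b - ∑ x, w (τ x)) := by
  classical
  calc #(A.image fun σ x => τ (σ x)) * Real.exp (∑ x, w (τ x))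
      = ∑ f ∈ A.image fun σ x => τ (σ x), ∏ x, Real.exp (w (f x)) := by
        rw [← nsmul_eq_mul, ← sum_const]
        refine sum_congr rfl fun f hf => ?_
        obtain ⟨σ, -, rfl⟩ := mem_image.1 hf
        rw [← Real.exp_sum, Equiv.sum_comp σ fun x => w (τ x)]
    _ ≤ ∑ f ∈ Fintype.piFinset fun x => ({s | R (τ x) s} : Finset ι), ∏ x, Real.exp (w (f x)) := by
        refine sum_le_sum_of_subset_of_nonneg (image_subset_iff.2 fun σ hσ => ?_)
          fun _ _ _ => by positivity
        simpa using hA σ hσ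
    _ = ∏ x, ∑ s with R (τ x) s, Real.exp (w s) := by rw [prod_univ_sum]
    _ ≤ ∏ x, Real.exp (b - w (τ x)) :=
        prod_le_prod (fun _ _ => by positivity) fun x _ => hw (τ x)
    _ = _ := by simp [← Real.exp_sum]

lemma card_le_card_fiberPerms_mul_exp [DecidableEq α]
    (hw : ∀ r, ∑ s with R r s, Real.exp (w s) ≤ Real.exp (b - w r))
    (hA : ∀ σ ∈ A, ∀ x, R (τ x) (τ (σ x))) :
    (#A : ℝ) ≤ #(fiberPerms τ) * Real.exp (Fintype.card α * b - 2 * ∑ x, w (τ x)) := by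
  have himage := card_image_mul_exp_le hw hA
  rw [← le_div_iff₀ (Real.exp_pos _), ← Real.exp_sub, sub_sub, ← two_mul] at himage
  calc (#A : ℝ) ≤ #(fiberPerms τ) * #(A.image fun σ x => τ (σ x)) :=
        mod_cast card_le_card_fiberPerms_mul_card_image τ A
    _ ≤ _ := by gcongr

end Compatible

section Factorials

lemma log_natCast_le_log_natCast {a b : ℕ} (h : a ≤ b) : Real.log a ≤ Real.log b := by
  rcases a.eq_zero_or_pos with rfl | ha
  · simpa using Real.log_natCast_nonneg b
  · gcongr

lemma mul_log_sub_le_log_factorial {x : ℝ} (hx : 0 < x) (N : ℕ) :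
    N * Real.log x - x ≤ Real.log N.factorial := by
  have h := Real.log_le_log (by positivity) (Real.pow_div_factorial_le_exp x hx.le N)
  rw [Real.log_div (by positivity) (by positivity), Real.log_pow, Real.log_exp] at h
  linarith

lemma log_factorial_le (N : ℕ) :
    Real.log N.factorial ≤ N * Real.log N - N + 1 + Real.log N := by
  induction N with
  | zero => simp
  | succ N ih =>
    rcases N.eq_zero_or_pos with rfl | hN
    · simp
    have hstep : 1 ≤ (N + 1) * (Real.log (N + 1) - Real.log N) := by
      rw [← Real.log_div (by positivity) (by positivity), ← div_le_iff₀' (by positivity)]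
      refine le_trans (le_of_eq ?_) (Real.one_sub_inv_le_log_of_pos (by positivity))
      field_simp
      ring
    rw [Nat.factorial_succ, Nat.cast_mul, Real.log_mul (by positivity) (by positivity)]
    push_cast
    linarith

lemma log_factorial_add_le {a b n : ℕ} (h : a + b ≤ n) :
    Real.log (a + b).factorial ≤ a * Real.log a - a + (1 + Real.log n) + b * Real.log n := by
  rcases n.eq_zero_or_pos with rfl | hn
  · obtain ⟨rfl, rfl⟩ : a = 0 ∧ b = 0 := by omega
    simp
  have hfac : (a + b).factorial ≤ a.factorial * n ^ b := by
    rw [← Nat.factorial_mul_ascFactorial]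
    exact Nat.mul_le_mul_left _
      ((Nat.ascFactorial_le_pow_add a b).trans (Nat.pow_le_pow_left h b))
  have hlog : Real.log a ≤ Real.log n := log_natCast_le_log_natCast (by omega)
  calc Real.log (a + b).factorial ≤ Real.log (a.factorial * n ^ b : ℕ) :=
        Real.log_le_log (by positivity) (mod_cast hfac)
    _ = Real.log a.factorial + b * Real.log n := by
        rw [Nat.cast_mul, Nat.cast_pow, Real.log_mul (by positivity) (by positivity), Real.log_pow]
    _ ≤ _ := by linarith [log_factorial_le a]

variable {α ι : Type*} [Fintype α] [DecidableEq α] [Fintype ι] [DecidableEq ι]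

lemma log_card_fiberPerms (τ : α → ι) :
    Real.log #(fiberPerms τ) = ∑ s, Real.log (#(fiber τ s)).factorial := by
  rw [card_fiberPerms, Nat.cast_prod, Real.log_prod fun s _ => by positivity]

lemma card_mul_log_sub_le_log_card_fiberPerms [Nonempty α] [Nonempty ι] (τ : α → ι) :
    Fintype.card α * (Real.log (Fintype.card α / Fintype.card ι) - 1) ≤
      Real.log #(fiberPerms τ) := by
  have hα : (0 : ℝ) < Fintype.card α := mod_cast Fintype.card_pos
  have hι : (0 : ℝ) < Fintype.card ι := mod_cast Fintype.card_pos
  let x : ℝ := Fintype.card α / Fintype.card ι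
  calc (Fintype.card α : ℝ) * (Real.log x - 1)
      = (∑ s, (#(fiber τ s) : ℝ)) * Real.log x - ∑ _s : ι, x := by
        rw [← Nat.cast_sum, sum_card_fiber, sum_const, card_univ, nsmul_eq_mul,
          mul_div_cancel₀ _ hι.ne']
        ring
    _ = ∑ s, (#(fiber τ s) * Real.log x - x) := by rw [sum_mul, sum_sub_distrib]
    _ ≤ ∑ s, Real.log (#(fiber τ s)).factorial :=
        sum_le_sum fun s _ => mul_log_sub_le_log_factorial (div_pos hα hι) _
    _ = _ := (log_card_fiberPerms τ).symm

lemma log_card_fiberPerms_le {τ : α → ι} {X : ℝ} (hX : ∀ s, #(fiber τ s) ≤ X) :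
    Real.log #(fiberPerms τ) ≤ Fintype.card α * (Real.log X - 1) +
      Fintype.card ι * (1 + Real.log (Fintype.card α)) := by
  have hfiber (s : ι) : Real.log (#(fiber τ s)).factorial ≤
      #(fiber τ s) * (Real.log X - 1) + (1 + Real.log (Fintype.card α)) := by
    rcases (#(fiber τ s)).eq_zero_or_pos with h | h
    · rw [h]
      simpa using add_nonneg zero_le_one (Real.log_natCast_nonneg (Fintype.card α))
    have hlogX : Real.log #(fiber τ s) ≤ Real.log X := Real.log_le_log (mod_cast h) (hX s)
    have hlogα : Real.log #(fiber τ s) ≤ Real.log (Fintype.card α) :=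
      log_natCast_le_log_natCast (card_le_univ _)
    nlinarith [log_factorial_le #(fiber τ s), mul_le_mul_of_nonneg_left hlogX
      (Nat.cast_nonneg (α := ℝ) #(fiber τ s))]
  calc Real.log #(fiberPerms τ) = ∑ s, Real.log (#(fiber τ s)).factorial := log_card_fiberPerms τ
    _ ≤ ∑ s, (#(fiber τ s) * (Real.log X - 1) + (1 + Real.log (Fintype.card α))) :=
        sum_le_sum fun s _ => hfiber s
    _ = _ := by
        rw [sum_add_distrib, ← sum_mul, ← Nat.cast_sum, sum_card_fiber, sum_const, card_univ,
          nsmul_eq_mul]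

end Factorials

section ScaledTables

variable {ι : Type*} [Fintype ι]

/-- A nonnegative integral table with all marginals `S` whose support carries the scaling
`T r s = S * exp (W r) * exp (W s)`; such a table is the entropy maximiser among the tables with
these marginals and this support. -/
structure IsScaledTable (T : ι → ι → ℕ) (S : ℕ) (W : ι → ℝ) : Prop where
  sum_row (r : ι) : ∑ s, T r s = S
  sum_col (s : ι) : ∑ r, T r s = S
  log_eq (r s : ι) : T r s ≠ 0 → Real.log (T r s) = Real.log S + W r + W s

namespace IsScaledTable

variable {T : ι → ι → ℕ} {S : ℕ} {W : ι → ℝ}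

lemma mul_log_mul (hT : IsScaledTable T S W) (m : ℕ) (r s : ι) :
    (m * T r s : ℕ) * Real.log (m * T r s : ℕ) =
      m * (T r s * Real.log (m * S : ℕ) + T r s * W r + T r s * W s) := by
  rcases eq_or_ne m 0 with rfl | hm
  · simp
  rcases eq_or_ne (T r s) 0 with h | h
  · simp [h]
  have hS : S ≠ 0 := by
    have : T r s ≤ S := hT.sum_row r ▸ single_le_sum_of_canonicallyOrdered (mem_univ s)
    omega
  push_cast
  rw [Real.log_mul (by positivity) (by positivity), Real.log_mul (by positivity) (by positivity),
    hT.log_eq r s h]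
  ring

lemma sum_mul_log_mul (hT : IsScaledTable T S W) (m : ℕ) :
    ∑ r, ∑ s, (m * T r s : ℕ) * Real.log (m * T r s : ℕ) =
      (m * S : ℕ) * (Fintype.card ι * Real.log (m * S : ℕ) + 2 * ∑ r, W r) := by
  have hrow (r : ι) : ∑ s, (T r s : ℝ) = S := mod_cast hT.sum_row r
  have hcol (s : ι) : ∑ r, (T r s : ℝ) = S := mod_cast hT.sum_col s
  have hcolW : ∑ r, ∑ s, T r s * W s = S * ∑ s, W s := by
    rw [sum_comm, mul_sum]
    simp only [← sum_mul, hcol]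
  simp only [hT.mul_log_mul, ← mul_sum, sum_add_distrib, ← sum_mul, hrow, hcolW, sum_const,
    card_univ, nsmul_eq_mul]
  push_cast
  ring

variable [DecidableEq ι] {α : Type*} [Fintype α] {m : ℕ} {e : ι → ι → ℕ}

lemma card_eq_add (hT : IsScaledTable T S W) {f : α → ι × ι}
    (hf : ∀ r s, #(fiber f (r, s)) = m * T r s + e r s) :
    Fintype.card α = Fintype.card ι * (m * S) + ∑ r, ∑ s, e r s := by
  rw [← sum_card_fiber f, Fintype.sum_prod_type]
  simp only [hf, sum_add_distrib, ← mul_sum, hT.sum_row, sum_const, card_univ, smul_eq_mul]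
  ring

variable [DecidableEq α]

lemma log_card_fiberPerms_le (hT : IsScaledTable T S W) {f : α → ι × ι}
    (hf : ∀ r s, #(fiber f (r, s)) = m * T r s + e r s) :
    Real.log #(fiberPerms f) ≤
      (m * S : ℕ) * (Fintype.card ι * (Real.log (m * S : ℕ) - 1) + 2 * ∑ r, W r) +
        (Fintype.card ι ^ 2 * (1 + Real.log (Fintype.card α)) +
          (∑ r, ∑ s, e r s : ℕ) * Real.log (Fintype.card α)) := by
  have hfiber (r s : ι) : m * T r s + e r s ≤ Fintype.card α := hf r s ▸ card_le_univ _
  have hsum : ∑ r, ∑ s, ((m * T r s : ℕ) : ℝ) = Fintype.card ι * (m * S : ℕ) := by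
    simp [← Nat.cast_sum, ← mul_sum, hT.sum_row]
  calc Real.log #(fiberPerms f)
      = ∑ r, ∑ s, Real.log (m * T r s + e r s).factorial := by
        simp only [log_card_fiberPerms, Fintype.sum_prod_type, hf]
    _ ≤ ∑ r, ∑ s, ((m * T r s : ℕ) * Real.log (m * T r s : ℕ) - (m * T r s : ℕ) +
          (1 + Real.log (Fintype.card α)) + e r s * Real.log (Fintype.card α)) :=
        sum_le_sum fun r _ => sum_le_sum fun s _ => log_factorial_add_le (hfiber r s)
    _ = _ := by
        simp only [sum_add_distrib, sum_sub_distrib, hT.sum_mul_log_mul, hsum, ← sum_mul,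
          sum_const, card_univ, nsmul_eq_mul]
        push_cast
        ring

/-- When `θ` realises a multiple of a scaled table, the double coset of `θ` has the size
`n! * exp (n * L)` predicted by the entropy, up to a subexponential factor. -/
lemma log_factorial_add_le_log_card (hT : IsScaledTable T S W) [Nonempty α] {τ : α → ι}
    {θ : Equiv.Perm α} (hθ : ∀ r s, #(fiber (fun x => (τ x, τ (θ x))) (r, s)) = m * T r s + e r s)
    (hι : Fintype.card ι ≤ Fintype.card α) {L : ℝ} (hL : L ≤ 0)
    (hLW : Fintype.card ι * L = -Fintype.card ι * Real.log (Fintype.card ι) - 2 * ∑ r, W r) :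
    Real.log (Fintype.card α).factorial + Fintype.card α * L ≤
      2 * Real.log #(fiberPerms τ) - Real.log #(fiberPerms fun x => (τ x, τ (θ x))) +
        (Fintype.card ι ^ 2 + 2 * (∑ r, ∑ s, e r s : ℕ) + 1) *
          (1 + Real.log (Fintype.card α)) := by
  have : Nonempty ι := ‹Nonempty α›.map τ
  have hF := hT.log_card_fiberPerms_le hθ
  have hH := card_mul_log_sub_le_log_card_fiberPerms τ
  have hn := log_factorial_le (Fintype.card α)
  have hcard : (Fintype.card α : ℝ) =
      Fintype.card ι * (m * S : ℕ) + (∑ r, ∑ s, e r s : ℕ) := mod_cast hT.card_eq_add hθ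
  have hαpos : (0 : ℝ) < Fintype.card α := mod_cast Fintype.card_pos
  have hQpos : (0 : ℝ) < Fintype.card ι := mod_cast Fintype.card_pos
  have hlogQ : Real.log (Fintype.card ι) ≤ Real.log (Fintype.card α) :=
    log_natCast_le_log_natCast hι
  rw [Real.log_div hαpos.ne' hQpos.ne'] at hH
  generalize (∑ r, ∑ s, e r s : ℕ) = k at *
  generalize m * S = N at *
  generalize (Fintype.card α : ℝ) = n at *
  generalize (Fintype.card ι : ℝ) = Q at *
  have hk : (0 : ℝ) ≤ k := k.cast_nonneg
  have hNlog : Q * N * (Real.log Q + Real.log N) ≤ Q * N * Real.log n := by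
    rcases N.eq_zero_or_pos with rfl | hN
    · simp
    rw [← Real.log_mul (by positivity) (by positivity)]
    gcongr
    linarith
  have hkL : k * L ≤ 0 := mul_nonpos_of_nonneg_of_nonpos hk hL
  have hNW : N * (Q * L) = N * (-Q * Real.log Q - 2 * ∑ r, W r) := by rw [hLW]
  have hkQ : k * Real.log Q ≤ k * Real.log n := mul_le_mul_of_nonneg_left hlogQ hk
  have hnlog : n * Real.log n = Q * N * Real.log n + k * Real.log n := by rw [← add_mul, ← hcard]
  have hnQ : n * Real.log Q = Q * N * Real.log Q + k * Real.log Q := by rw [← add_mul, ← hcard]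
  have hnL : n * L = Q * N * L + k * L := by rw [← add_mul, ← hcard]
  linarith

end IsScaledTable

end ScaledTables

section EulerFactors

lemma sum_ite_eq_add_card_nsmul {ι M : Type*} [Fintype ι] [DecidableEq ι] [AddCommMonoid M]
    (a : ι) (x y : M) :
    ∑ t, (if t = a then x else y) = x + (Fintype.card ι - 1) • y := by
  rw [← add_sum_erase univ _ (mem_univ a), if_pos rfl,
    sum_congr rfl fun t ht => if_neg (ne_of_mem_erase ht), sum_const,
    card_erase_of_mem (mem_univ a), card_univ]

/-- The factor at `p` of the product defining `coprimeConst`, with `p - 2` perturbed to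
`p - 2 + δ`: a positive `δ` removes the singularity at `p = 2`. -/
noncomputable def eulerFactor (δ : ℝ) (p : ℕ) : ℝ :=
  ((p : ℝ) - 1) ^ (2 * (1 - 1 / (p : ℝ))) / (p * ((p : ℝ) - 2 + δ) ^ (1 - 2 / (p : ℝ)))

/-- The logarithm of the weight of a residue `t` modulo `p` in the scaling of the compatibility
relation `¬ (s = 0 ∧ t = 0)`, perturbed by `δ`. For `δ = 0` and `p = 2` all weights are `0`, since
`Real.log 0 = 0`. -/
noncomputable def logWeight (δ : ℝ) (p : ℕ) (t : ZMod p) : ℝ :=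
  if t = 0 then -(Real.log (p - 2 + δ) / 2) else Real.log (p - 2 + δ) / 2 - Real.log (p - 1)

variable {δ : ℝ} {p : ℕ} [hp : Fact p.Prime]

lemma sum_logWeight :
    ∑ t, logWeight δ p t =
      ((p : ℝ) - 2) / 2 * Real.log (p - 2 + δ) - (p - 1) * Real.log (p - 1) := by
  simp only [logWeight, sum_ite_eq_add_card_nsmul, ZMod.card, nsmul_eq_mul,
    Nat.cast_pred hp.out.pos]
  ring

lemma sub_two_add_pos_or_eq_two (hδ : 0 ≤ δ) : 0 < (p : ℝ) - 2 + δ ∨ p = 2 := by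
  rcases hp.out.two_le.eq_or_lt with h | h
  · exact .inr h.symm
  · have : (3 : ℝ) ≤ p := mod_cast h
    exact .inl (by linarith)

lemma rpow_sub_two_add_pos (hδ : 0 ≤ δ) :
    0 < ((p : ℝ) - 2 + δ) ^ (1 - 2 / (p : ℝ)) := by
  rcases sub_two_add_pos_or_eq_two (p := p) hδ with h | rfl
  · positivity
  · simp

lemma eulerFactor_pos (hδ : 0 ≤ δ) : 0 < eulerFactor δ p := by
  have h1 : (0 : ℝ) < p - 1 := sub_pos.2 (mod_cast hp.out.one_lt)
  exact div_pos (by positivity) (mul_pos (mod_cast hp.out.pos) (rpow_sub_two_add_pos (p := p) hδ))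

lemma log_eulerFactor (hδ : 0 ≤ δ) :
    Real.log (eulerFactor δ p) = -Real.log p - 2 / p * ∑ t, logWeight δ p t := by
  have h1 : (0 : ℝ) < p - 1 := sub_pos.2 (mod_cast hp.out.one_lt)
  have hp0 : (0 : ℝ) < p := mod_cast hp.out.pos
  have hlog : Real.log (((p : ℝ) - 2 + δ) ^ (1 - 2 / (p : ℝ))) =
      (1 - 2 / (p : ℝ)) * Real.log (p - 2 + δ) := by
    rcases sub_two_add_pos_or_eq_two (p := p) hδ with h | rfl
    · exact Real.log_rpow h _
    · simp
  have hpow := rpow_sub_two_add_pos (p := p) hδ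
  rw [eulerFactor, Real.log_div (by positivity) (mul_pos hp0 hpow).ne',
    Real.log_mul hp0.ne' hpow.ne', Real.log_rpow h1, hlog,
    sum_logWeight]
  field_simp
  ring

lemma tendsto_eulerFactor :
    Tendsto (eulerFactor · p) (nhdsWithin 0 (Set.Ioi 0)) (nhds (eulerFactor 0 p)) := by
  have hexp : 0 ≤ 1 - 2 / (p : ℝ) :=
    sub_nonneg.2 (div_le_one_of_le₀ (mod_cast hp.out.two_le) p.cast_nonneg)
  have hbase : ContinuousAt (fun δ : ℝ => ((p : ℝ) - 2 + δ) ^ (1 - 2 / (p : ℝ))) 0 :=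
    (continuousAt_const.add continuousAt_id).rpow_const (.inr hexp)
  exact (continuousAt_const.div (continuousAt_const.mul hbase)
    (mul_pos (Nat.cast_pos.2 hp.out.pos) (rpow_sub_two_add_pos le_rfl)).ne').tendsto.mono_left
      nhdsWithin_le_nhds

lemma eulerFactor_zero_le_one : eulerFactor 0 p ≤ 1 := by
  rcases hp.out.two_le.eq_or_lt with rfl | h
  · norm_num [eulerFactor]
  have hp3 : (3 : ℝ) ≤ p := mod_cast h
  have hp0 : (0 : ℝ) < p := by linarith
  have hp1 : (0 : ℝ) < p - 1 := by linarith
  have hp2 : (0 : ℝ) < p - 2 := by linarith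
  have hlog : p * Real.log (eulerFactor 0 p) = 2 * Real.log ((p - 1) / p) +
      (p - 2) * Real.log ((p - 1) ^ 2 / (p * (p - 2))) := by
    rw [log_eulerFactor le_rfl, sum_logWeight, add_zero, Real.log_div hp1.ne' hp0.ne',
      Real.log_div (by positivity) (by positivity), Real.log_pow, Real.log_mul hp0.ne' hp2.ne']
    field_simp
    push_cast
    ring
  rw [← Real.log_nonpos_iff (eulerFactor_pos le_rfl).le]
  refine nonpos_of_mul_nonpos_right ?_ hp0
  calc p * Real.log (eulerFactor 0 p)
      ≤ 2 * ((p - 1) / p - 1) + (p - 2) * ((p - 1) ^ 2 / (p * (p - 2)) - 1) := by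
        rw [hlog]
        gcongr <;> exact Real.log_le_sub_one_of_pos (by positivity)
    _ = -(1 / p) := by
        field_simp
        ring
    _ ≤ 0 := by
        rw [neg_nonpos]
        positivity

lemma exp_logWeight (hy : 0 < (p : ℝ) - 2 + δ) (t : ZMod p) :
    Real.exp (logWeight δ p t) =
      if t = 0 then (√((p : ℝ) - 2 + δ))⁻¹ else √((p : ℝ) - 2 + δ) / (p - 1) := by
  have hp1 : (0 : ℝ) < p - 1 := sub_pos.2 (mod_cast hp.out.one_lt)
  rw [logWeight, ← Real.log_sqrt hy.le]
  split_ifs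
  · rw [Real.exp_neg, Real.exp_log (by positivity)]
  · rw [Real.exp_sub, Real.exp_log (by positivity), Real.exp_log hp1]

lemma sum_exp_logWeight_le (hδ : 0 < δ) (s : ZMod p) :
    ∑ t with ¬ (s = 0 ∧ t = 0), Real.exp (logWeight δ p t) ≤
      Real.exp (δ - logWeight δ p s) := by
  have hp2 : (2 : ℝ) ≤ p := mod_cast hp.out.two_le
  have hp1 : (0 : ℝ) < p - 1 := by linarith
  have hy : 0 < (p : ℝ) - 2 + δ := by linarith
  have hsq : √((p : ℝ) - 2 + δ) * √((p : ℝ) - 2 + δ) = p - 2 + δ := Real.mul_self_sqrt hy.le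
  have hsqrt : 0 < √((p : ℝ) - 2 + δ) := Real.sqrt_pos.2 hy
  have hexp : 1 + δ ≤ Real.exp δ := add_comm δ 1 ▸ Real.add_one_le_exp δ
  rw [Real.exp_sub, exp_logWeight hy s]
  split_ifs with hs
  · calc ∑ t with ¬ (s = 0 ∧ t = 0), Real.exp (logWeight δ p t)
        = ∑ t : ZMod p, if t = 0 then 0 else √((p : ℝ) - 2 + δ) / (p - 1) := by
          rw [sum_filter]
          refine sum_congr rfl fun t _ => ?_
          by_cases ht : t = 0 <;> simp [hs, ht, exp_logWeight hy]
      _ = √((p : ℝ) - 2 + δ) := by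
          rw [sum_ite_eq_add_card_nsmul, ZMod.card, nsmul_eq_mul, Nat.cast_pred hp.out.pos,
            zero_add, mul_div_cancel₀ _ hp1.ne']
      _ ≤ Real.exp δ / (√((p : ℝ) - 2 + δ))⁻¹ := by
          rw [div_inv_eq_mul]
          exact le_mul_of_one_le_left hsqrt.le (by linarith)
  · calc ∑ t with ¬ (s = 0 ∧ t = 0), Real.exp (logWeight δ p t)
        = (√((p : ℝ) - 2 + δ))⁻¹ + √((p : ℝ) - 2 + δ) := by
          simp only [hs, false_and, not_false_eq_true, filter_true, exp_logWeight hy]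
          rw [sum_ite_eq_add_card_nsmul, ZMod.card, nsmul_eq_mul, Nat.cast_pred hp.out.pos,
            mul_div_cancel₀ _ hp1.ne']
      _ = (p - 1 + δ) / √((p : ℝ) - 2 + δ) := by
          field_simp
          rw [sq, hsq]
          ring
      _ ≤ Real.exp δ * (p - 1) / √((p : ℝ) - 2 + δ) := by
          gcongr
          nlinarith
      _ = Real.exp δ / (√((p : ℝ) - 2 + δ) / (p - 1)) := (div_div_eq_mul_div _ _ _).symm

end EulerFactors

section EulerProduct

instance (p : Nat.Primes) : Fact (p : ℕ).Prime := ⟨p.2⟩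

lemma prod_eulerFactor_pos {δ : ℝ} (hδ : 0 ≤ δ) (P : Finset Nat.Primes) :
    0 < ∏ p ∈ P, eulerFactor δ p :=
  prod_pos fun _ _ => eulerFactor_pos hδ

lemma prod_eulerFactor_zero_le_one (P : Finset Nat.Primes) : ∏ p ∈ P, eulerFactor 0 p ≤ 1 :=
  prod_le_one (fun _ _ => (eulerFactor_pos le_rfl).le) fun _ _ => eulerFactor_zero_le_one

lemma antitone_prod_eulerFactor_zero :
    Antitone fun P : Finset Nat.Primes => ∏ p ∈ P, eulerFactor 0 p := fun P P' h => by
  dsimp only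
  rw [← prod_sdiff h]
  exact mul_le_of_le_one_left (prod_eulerFactor_pos le_rfl P).le
    (prod_eulerFactor_zero_le_one _)

lemma hasProd_eulerFactor_zero :
    HasProd (fun p : Nat.Primes => eulerFactor 0 p) coprimeConst := by
  have hmul : Multipliable fun p : Nat.Primes => eulerFactor 0 p :=
    ⟨_, tendsto_atTop_ciInf antitone_prod_eulerFactor_zero
      ⟨0, Set.forall_mem_range.2 fun P => (prod_eulerFactor_pos le_rfl P).le⟩⟩
  simpa only [coprimeConst, eulerFactor, add_zero] using hmul.hasProd

lemma coprimeConst_le_prod_eulerFactor_zero (P : Finset Nat.Primes) :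
    coprimeConst ≤ ∏ p ∈ P, eulerFactor 0 p :=
  antitone_prod_eulerFactor_zero.le_of_tendsto hasProd_eulerFactor_zero P

end EulerProduct

section Residues

/-- Systems of residues modulo the primes in `P`. -/
abbrev Residues (P : Finset Nat.Primes) := ∀ p : P, ZMod (p : Nat.Primes)

/-- The residues of `k` modulo the primes in `P`. -/
def residue (P : Finset Nat.Primes) (k : ℕ) : Residues P := fun _ => (k : ZMod _)

/-- The product of the primes in `P`, the period of `residue P`. -/
def modulus (P : Finset Nat.Primes) : ℕ := ∏ p ∈ P, (p : ℕ)

variable (P : Finset Nat.Primes)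

lemma modulus_pos : 0 < modulus P := prod_pos fun p _ => p.2.pos

lemma card_residues : Fintype.card (Residues P) = modulus P := by
  simp only [Fintype.card_pi, ZMod.card, modulus]
  exact prod_coe_sort P fun p => (p : ℕ)

lemma pairwise_coprime_primes (s : Set Nat.Primes) :
    s.Pairwise (Function.onFun Nat.Coprime fun p : Nat.Primes => (p : ℕ)) :=
  fun p _ q _ hpq => (Nat.coprime_primes p.2 q.2).2 (Subtype.coe_injective.ne hpq)

lemma totient_modulus : (modulus P).totient = ∏ p ∈ P, ((p : ℕ) - 1) := by
  induction P using Finset.induction_on with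
  | empty => simp [modulus]
  | insert p P hp ih =>
    have hcop : Nat.Coprime p (modulus P) := Nat.Coprime.prod_right fun q hq =>
      (Nat.coprime_primes p.2 q.2).2 (Subtype.coe_injective.ne (ne_of_mem_of_not_mem hq hp).symm)
    rw [modulus, prod_insert hp, prod_insert hp, ← modulus, Nat.totient_mul hcop,
      Nat.totient_prime p.2, ih]

variable {P}

lemma residue_apply_eq_zero_iff {k : ℕ} {p : P} :
    residue P k p = 0 ↔ ((p : Nat.Primes) : ℕ) ∣ k :=
  ZMod.natCast_eq_zero_iff _ _

lemma residue_eq_iff {k l : ℕ} : residue P k = residue P l ↔ k ≡ l [MOD modulus P] := by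
  have hdvd (d : ℤ) : (modulus P : ℤ) ∣ d ↔ ∀ p ∈ P, ((p : ℕ) : ℤ) ∣ d := by
    refine ⟨fun h p hp => (Int.natCast_dvd_natCast.2 (dvd_prod_of_mem _ hp)).trans h, fun h => ?_⟩
    rw [modulus, Nat.cast_prod]
    exact prod_dvd_of_coprime ((pairwise_coprime_primes _).mono' fun p q h =>
      Nat.isCoprime_iff_coprime.2 h) h
  rw [Nat.modEq_iff_dvd, hdvd, funext_iff]
  simp only [residue, ZMod.natCast_eq_natCast_iff, Nat.modEq_iff_dvd, Subtype.forall]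

lemma residue_surjective : Function.Surjective (residue P) := fun r => by
  obtain ⟨k, hk⟩ := Nat.chineseRemainderOfFinset (fun p : P => (r p).val)
    (fun p => ((p : Nat.Primes) : ℕ)) univ (fun p _ => (p : Nat.Primes).2.ne_zero)
    fun p _ q _ hpq => pairwise_coprime_primes P p.2 q.2 (Subtype.coe_injective.ne hpq)
  refine ⟨k, funext fun p => ?_⟩
  rw [residue, (ZMod.natCast_eq_natCast_iff _ _ _).2 (hk p (mem_univ p)), ZMod.natCast_zmod_val]

end Residues

section ResidueClasses

/-- The residues of the number `i + 1 ∈ {1, …, n}` represented by `i : Fin n`. -/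
def residueOf (P : Finset Nat.Primes) (n : ℕ) (i : Fin n) : Residues P := residue P (i + 1)

variable {P : Finset Nat.Primes}

lemma card_filter_fin_eq_count (q : ℕ → Prop) [DecidablePred q] (n : ℕ) :
    #{i : Fin n | q i} = Nat.count q n := by
  rw [Nat.count_eq_card_filter_range, card_filter, card_filter,
    Fin.sum_univ_eq_sum_range fun i => if q i then 1 else 0]

lemma exists_card_fiber_residueOf (r : Residues P) :
    ∃ v, ∀ n, #(fiber (residueOf P n) r) =
      n / modulus P + if v % modulus P < n % modulus P then 1 else 0 := by
  have hQ := modulus_pos P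
  obtain ⟨k, rfl⟩ := residue_surjective r
  refine ⟨k + (modulus P - 1), fun n => ?_⟩
  have hiff (i : ℕ) :
      residue P (i + 1) = residue P k ↔ i ≡ k + (modulus P - 1) [MOD modulus P] := by
    have hk : k + (modulus P - 1) + 1 ≡ k [MOD modulus P] := by
      rw [add_assoc, Nat.sub_add_cancel hQ]
      exact Nat.add_modEq_right
    rw [residue_eq_iff]
    exact ⟨fun h => Nat.ModEq.add_right_cancel' 1 (h.trans hk.symm),
      fun h => (h.add_right 1).trans hk⟩
  rw [← Nat.count_modEq_card n hQ, ← card_filter_fin_eq_count]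
  simp only [← hiff]
  rfl

lemma div_le_card_fiber_residueOf (n : ℕ) (r : Residues P) :
    n / modulus P ≤ #(fiber (residueOf P n) r) := by
  obtain ⟨v, hv⟩ := exists_card_fiber_residueOf r
  exact hv n ▸ Nat.le_add_right _ _

lemma card_fiber_residueOf_le (n : ℕ) (r : Residues P) :
    #(fiber (residueOf P n) r) ≤ n / modulus P + 1 := by
  obtain ⟨v, hv⟩ := exists_card_fiber_residueOf r
  rw [hv]
  split_ifs <;> omega

lemma card_fiber_residueOf_add (a k : ℕ) (r : Residues P) :
    #(fiber (residueOf P (modulus P * a + k)) r) = a + #(fiber (residueOf P k) r) := by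
  obtain ⟨v, hv⟩ := exists_card_fiber_residueOf r
  rw [hv, hv, Nat.mul_add_div (modulus_pos P), Nat.mul_add_mod, add_assoc]

end ResidueClasses

section CompatibleResidues

/-- Two systems of residues that do not vanish modulo the same prime of `P`. -/
def Compatible {P : Finset Nat.Primes} (r s : Residues P) : Prop := ∀ p, ¬ (r p = 0 ∧ s p = 0)

instance {P : Finset Nat.Primes} (r s : Residues P) : Decidable (Compatible r s) :=
  inferInstanceAs (Decidable (∀ p, ¬ (r p = 0 ∧ s p = 0)))

/-- The logarithmic weight of a system of residues: the sum of the logarithmic weights of its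
components. -/
noncomputable def weight (δ : ℝ) {P : Finset Nat.Primes} (r : Residues P) : ℝ :=
  ∑ p : P, logWeight δ (p : Nat.Primes) (r p)

lemma card_mul_sum_comp_eval {ι : Type*} [Fintype ι] [DecidableEq ι] {κ : ι → Type*}
    [∀ i, Fintype (κ i)] (i : ι) (A : κ i → ℝ) :
    Fintype.card (κ i) * ∑ f : ∀ j, κ j, A (f i) = Fintype.card (∀ j, κ j) * ∑ t, A t := by
  rw [← (Equiv.piSplitAt i κ).symm.sum_comp, Fintype.card_congr (Equiv.piSplitAt i κ),
    Fintype.card_prod, Fintype.sum_prod_type]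
  simp [← mul_sum, mul_assoc]

variable {P : Finset Nat.Primes} {δ : ℝ}

lemma compatible_residue_of_coprime {k l : ℕ} (h : Nat.gcd k l = 1) :
    Compatible (residue P k) (residue P l) := fun p hp => by
  rw [residue_apply_eq_zero_iff, residue_apply_eq_zero_iff] at hp
  exact Nat.not_coprime_of_dvd_of_dvd (p : Nat.Primes).2.one_lt hp.1 hp.2 h

lemma sum_weight (δ : ℝ) (P : Finset Nat.Primes) :
    ∑ r : Residues P, weight δ r =
      modulus P * ∑ p ∈ P, 1 / ((p : ℕ) : ℝ) * ∑ t, logWeight δ p t := by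
  rw [← sum_coe_sort P, mul_sum]
  simp only [weight]
  rw [sum_comm]
  refine sum_congr rfl fun p _ => ?_
  have h := card_mul_sum_comp_eval (κ := fun p : P => ZMod (p : Nat.Primes)) p
    (logWeight δ (p : Nat.Primes))
  have hp : (((p : Nat.Primes) : ℕ) : ℝ) ≠ 0 := mod_cast (p : Nat.Primes).2.ne_zero
  rw [ZMod.card, card_residues] at h
  field_simp
  linarith

lemma modulus_mul_log_prod_eulerFactor (hδ : 0 ≤ δ) (P : Finset Nat.Primes) :
    modulus P * Real.log (∏ p ∈ P, eulerFactor δ p) =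
      -modulus P * Real.log (modulus P) - 2 * ∑ r : Residues P, weight δ r := by
  have hlogQ : Real.log (modulus P) = ∑ p ∈ P, Real.log (p : ℕ) := by
    rw [modulus, Nat.cast_prod, Real.log_prod fun p _ => mod_cast p.2.ne_zero]
  have hfactor (p : Nat.Primes) : Real.log (eulerFactor δ p) =
      -Real.log (p : ℕ) - 2 * (1 / ((p : ℕ) : ℝ) * ∑ t, logWeight δ p t) := by
    rw [log_eulerFactor hδ]
    ring
  simp only [Real.log_prod fun _ _ => (eulerFactor_pos hδ).ne', hlogQ, sum_weight, hfactor,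
    sum_sub_distrib, sum_neg_distrib, ← mul_sum]
  ring

lemma sum_exp_weight_le (hδ : 0 < δ) (r : Residues P) :
    ∑ s with Compatible r s, Real.exp (weight δ s) ≤ Real.exp (#P * δ - weight δ r) := by
  have hcompat : univ.filter (Compatible r) =
      Fintype.piFinset fun p => {t | ¬ (r p = 0 ∧ t = 0)} := by
    ext s
    simp [Compatible]
  calc ∑ s with Compatible r s, Real.exp (weight δ s)
      = ∏ p : P, ∑ t with ¬ (r p = 0 ∧ t = 0), Real.exp (logWeight δ (p : Nat.Primes) t) := by
        rw [hcompat, prod_univ_sum]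
        exact sum_congr rfl fun s _ => Real.exp_sum _ _
    _ ≤ ∏ p : P, Real.exp (δ - logWeight δ (p : Nat.Primes) (r p)) :=
        prod_le_prod (fun p _ => sum_nonneg fun t _ => (Real.exp_pos _).le) fun p _ =>
          sum_exp_logWeight_le hδ (r p)
    _ = Real.exp (#P * δ - weight δ r) := by
        rw [← Real.exp_sum, sum_sub_distrib, weight]
        simp

end CompatibleResidues

section CoprimePermutations

/-- The coprime permutations of `{1, …, n}`, whose elements `i + 1` are represented by
`i : Fin n`. -/
def coprimePerms (n : ℕ) : Finset (Equiv.Perm (Fin n)) :=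
  {σ | ∀ i : Fin n, Nat.gcd (i.1 + 1) ((σ i).1 + 1) = 1}

lemma mem_coprimePerms {n : ℕ} {σ : Equiv.Perm (Fin n)} :
    σ ∈ coprimePerms n ↔ ∀ i : Fin n, Nat.gcd (i.1 + 1) ((σ i).1 + 1) = 1 := by
  simp [coprimePerms]

lemma coprimePermCount_eq_card (n : ℕ) : coprimePermCount n = #(coprimePerms n) := by
  rw [coprimePermCount, Nat.card_eq_fintype_card, Fintype.card_subtype, coprimePerms]

lemma finRotate_mem_coprimePerms (n : ℕ) : finRotate n ∈ coprimePerms n :=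
  mem_coprimePerms.2 fun i => by
    rcases n with _ | n
    · exact i.elim0
    · rw [coe_finRotate]
      split_ifs <;> simp

lemma card_coprimePerms_pos (n : ℕ) : 0 < #(coprimePerms n) :=
  card_pos.2 ⟨_, finRotate_mem_coprimePerms n⟩

lemma compatible_residueOf_of_mem_coprimePerms {P : Finset Nat.Primes} {n : ℕ}
    {σ : Equiv.Perm (Fin n)} (hσ : σ ∈ coprimePerms n) (i : Fin n) :
    Compatible (residueOf P n i) (residueOf P n (σ i)) :=
  compatible_residue_of_coprime (mem_coprimePerms.1 hσ i)

/-- The logarithm of `(C(n) / n!) ^ (1 / n)`. -/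
noncomputable def logRate (n : ℕ) : ℝ :=
  (Real.log #(coprimePerms n) - Real.log n.factorial) / n

lemma coprimePermCount_div_factorial_rpow (n : ℕ) :
    ((coprimePermCount n : ℝ) / n.factorial) ^ (n : ℝ)⁻¹ = Real.exp (logRate n) := by
  have hC : (0 : ℝ) < #(coprimePerms n) := mod_cast card_coprimePerms_pos n
  rw [coprimePermCount_eq_card, Real.rpow_def_of_pos (by positivity),
    Real.log_div hC.ne' (by positivity), ← div_eq_mul_inv, logRate]

end CoprimePermutations

section UpperBound

variable {P : Finset Nat.Primes}

lemma tendsto_log_natCast_div : Tendsto (fun n : ℕ => Real.log n / n) atTop (nhds 0) :=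
  Real.isLittleO_log_id_atTop.tendsto_div_nhds_zero.comp tendsto_natCast_atTop_atTop

lemma tendsto_card_fiber_residueOf_div (r : Residues P) :
    Tendsto (fun n => (#(fiber (residueOf P n) r) : ℝ) / n) atTop (nhds (modulus P : ℝ)⁻¹) := by
  have hQ : (0 : ℝ) < modulus P := mod_cast modulus_pos P
  have hfloor : Tendsto (fun n : ℕ => ((n / modulus P : ℕ) : ℝ) / n) atTop
      (nhds (modulus P : ℝ)⁻¹) := by
    refine ((tendsto_nat_floor_mul_div_atTop (inv_nonneg.2 hQ.le)).comp
      (tendsto_natCast_atTop_atTop (R := ℝ))).congr fun n => ?_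
    rw [Function.comp_apply, ← div_eq_inv_mul, Nat.floor_div_eq_div]
  refine tendsto_of_tendsto_of_tendsto_of_le_of_le hfloor
    (by simpa using hfloor.add tendsto_inv_atTop_nhds_zero_nat) (fun n => ?_) fun n => ?_
  · have := div_le_card_fiber_residueOf n r
    dsimp only
    gcongr
  · have : (#(fiber (residueOf P n) r) : ℝ) ≤ (n / modulus P : ℕ) + 1 :=
      mod_cast card_fiber_residueOf_le n r
    dsimp only
    rw [← one_div, ← add_div]
    gcongr

lemma logRate_le {δ : ℝ} (hδ : 0 < δ) (P : Finset Nat.Primes) {n : ℕ} (hn : 0 < n) :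
    logRate n ≤ Real.log ((modulus P : ℝ)⁻¹ + (n : ℝ)⁻¹) +
      modulus P * ((n : ℝ)⁻¹ + Real.log n / n) + #P * δ -
        2 * ∑ r, #(fiber (residueOf P n) r) / (n : ℝ) * weight δ r := by
  have hn' : (0 : ℝ) < n := mod_cast hn
  have hQ : (0 : ℝ) < modulus P := mod_cast modulus_pos P
  have hF : (0 : ℝ) < #(fiberPerms (residueOf P n)) := mod_cast card_fiberPerms_pos _
  have hC : (0 : ℝ) < #(coprimePerms n) := mod_cast card_coprimePerms_pos n
  have hcard := Real.log_le_log hC <| card_le_card_fiberPerms_mul_exp (τ := residueOf P n)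
    (sum_exp_weight_le hδ) fun _ => compatible_residueOf_of_mem_coprimePerms
  rw [Real.log_mul hF.ne' (Real.exp_pos _).ne', Real.log_exp, Fintype.card_fin,
    sum_comp_eq_sum_card_fiber_mul] at hcard
  have hfiber (r : Residues P) : (#(fiber (residueOf P n) r) : ℝ) ≤ n / modulus P + 1 :=
    (Nat.cast_le.2 (card_fiber_residueOf_le n r)).trans
      (by push_cast; gcongr; exact Nat.cast_div_le)
  have hperms := log_card_fiberPerms_le hfiber
  rw [Fintype.card_fin, card_residues] at hperms
  have hlog : Real.log (n / modulus P + 1) =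
      Real.log n + Real.log ((modulus P : ℝ)⁻¹ + (n : ℝ)⁻¹) := by
    rw [← Real.log_mul hn'.ne' (by positivity)]
    congr 1
    field_simp
  have hfac := mul_log_sub_le_log_factorial hn' n
  rw [hlog] at hperms
  generalize Real.log ((modulus P : ℝ)⁻¹ + (n : ℝ)⁻¹) = ℓ at hperms ⊢
  simp only [div_mul_eq_mul_div, ← sum_div]
  rw [logRate, div_le_iff₀ hn']
  field_simp
  linarith

lemma tendsto_logRate_bound {δ : ℝ} (hδ : 0 ≤ δ) (P : Finset Nat.Primes) :
    Tendsto (fun n : ℕ => Real.log ((modulus P : ℝ)⁻¹ + (n : ℝ)⁻¹) +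
      modulus P * ((n : ℝ)⁻¹ + Real.log n / n) + #P * δ -
        2 * ∑ r, #(fiber (residueOf P n) r) / (n : ℝ) * weight δ r) atTop
      (nhds (Real.log (∏ p ∈ P, eulerFactor δ p) + #P * δ)) := by
  have hQ : (0 : ℝ) < modulus P := mod_cast modulus_pos P
  have hinv : Tendsto (fun n : ℕ => (n : ℝ)⁻¹) atTop (nhds 0) := tendsto_inv_atTop_nhds_zero_nat
  have hlim : Real.log (∏ p ∈ P, eulerFactor δ p) + #P * δ =
      Real.log ((modulus P : ℝ)⁻¹ + 0) + modulus P * (0 + 0) + #P * δ -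
        2 * ∑ r : Residues P, (modulus P : ℝ)⁻¹ * weight δ r := by
    have h := modulus_mul_log_prod_eulerFactor hδ P
    rw [add_zero, Real.log_inv, ← mul_sum]
    field_simp
    linarith
  rw [hlim]
  exact ((((hinv.const_add _).log (by positivity)).add
    ((hinv.add tendsto_log_natCast_div).const_mul _)).add_const _).sub
    ((tendsto_finsetSum _ fun r _ => (tendsto_card_fiber_residueOf_div r).mul_const _).const_mul _)

lemma exists_log_prod_eulerFactor_add_lt (P : Finset Nat.Primes) {v : ℝ}
    (hv : Real.log (∏ p ∈ P, eulerFactor 0 p) < v) :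
    ∃ δ > 0, Real.log (∏ p ∈ P, eulerFactor δ p) + #P * δ < v := by
  have hlog : Tendsto (fun δ => Real.log (∏ p ∈ P, eulerFactor δ p)) (nhdsWithin 0 (Set.Ioi 0))
      (nhds (Real.log (∏ p ∈ P, eulerFactor 0 p))) :=
    (tendsto_finsetProd P fun _ _ => tendsto_eulerFactor).log (prod_eulerFactor_pos le_rfl P).ne'
  have hlin : Tendsto (fun δ : ℝ => #P * δ) (nhdsWithin 0 (Set.Ioi 0)) (nhds (#P * 0)) :=
    (tendsto_nhdsWithin_of_tendsto_nhds tendsto_id).const_mul _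
  obtain ⟨δ, hδv, hδ⟩ := (((hlog.add hlin).eventually_lt_const (by simpa using hv)).and
    self_mem_nhdsWithin).exists
  exact ⟨δ, hδ, hδv⟩

lemma eventually_logRate_lt (P : Finset Nat.Primes) {v : ℝ}
    (hv : Real.log (∏ p ∈ P, eulerFactor 0 p) < v) : ∀ᶠ n in atTop, logRate n < v := by
  obtain ⟨δ, hδ, hδv⟩ := exists_log_prod_eulerFactor_add_lt P hv
  filter_upwards [(tendsto_logRate_bound hδ.le P).eventually_lt_const hδv, eventually_gt_atTop 0]
    with n hnv hn
  exact (logRate_le hδ P hn).trans_lt hnv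

end UpperBound

section LimitingTable

/-- The weight of a pair of residues modulo `p` in the limiting table. -/
def pairWeight (p : ℕ) (s t : ZMod p) : ℕ :=
  if s = 0 then (if t = 0 then 0 else p - 1) else (if t = 0 then p - 1 else p - 2)

/-- The weight of a pair of systems of residues in the limiting table: a coprime permutation that
distributes each residue class in these proportions maximizes the entropy. -/
def tableWeight {P : Finset Nat.Primes} (r s : Residues P) : ℕ :=
  ∏ p : P, pairWeight (p : Nat.Primes) (r p) (s p)

variable {p : ℕ}

lemma pairWeight_comm (s t : ZMod p) : pairWeight p s t = pairWeight p t s := by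
  unfold pairWeight
  split_ifs <;> rfl

variable [hp : Fact p.Prime]

lemma sum_pairWeight (s : ZMod p) : ∑ t, pairWeight p s t = (p - 1) ^ 2 := by
  obtain ⟨k, hk⟩ := Nat.exists_eq_add_of_le' hp.out.two_le
  by_cases hs : s = 0 <;>
    simp only [pairWeight, hs, if_true, if_false, sum_ite_eq_add_card_nsmul, ZMod.card,
      smul_eq_mul, hk, Nat.add_sub_cancel, show k + 2 - 1 = k + 1 by omega] <;> ring

lemma log_pairWeight {s t : ZMod p} (h : pairWeight p s t ≠ 0) :
    Real.log (pairWeight p s t) =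
      2 * Real.log ((p - 1 : ℕ) : ℝ) + logWeight 0 p s + logWeight 0 p t := by
  have h1 : ((p - 1 : ℕ) : ℝ) = p - 1 := Nat.cast_pred hp.out.pos
  have h2 : ((p - 2 : ℕ) : ℝ) = p - 2 := by simp [Nat.cast_sub hp.out.two_le]
  simp only [pairWeight, logWeight, add_zero, ← h1, ← h2] at h ⊢
  split_ifs at h ⊢ <;> first | exact absurd rfl h | ring

variable {P : Finset Nat.Primes}

lemma tableWeight_comm (r s : Residues P) : tableWeight r s = tableWeight s r :=
  prod_congr rfl fun _ _ => pairWeight_comm _ _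

lemma sum_tableWeight (r : Residues P) : ∑ s, tableWeight r s = (modulus P).totient ^ 2 := by
  simp only [tableWeight]
  rw [← Fintype.prod_sum fun (p : P) t => pairWeight (p : Nat.Primes) (r p) t]
  simp only [sum_pairWeight]
  rw [prod_coe_sort P fun p => ((p : ℕ) - 1) ^ 2, prod_pow, totient_modulus]

lemma log_tableWeight {r s : Residues P} (h : tableWeight r s ≠ 0) :
    Real.log (tableWeight r s) =
      Real.log ((modulus P).totient ^ 2 : ℕ) + weight 0 r + weight 0 s := by
  have hpair (p : P) : pairWeight (p : Nat.Primes) (r p) (s p) ≠ 0 :=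
    prod_ne_zero_iff.1 h p (mem_univ p)
  have htotient : Real.log (modulus P).totient =
      ∑ p : P, Real.log (((p : Nat.Primes) - 1 : ℕ) : ℝ) := by
    rw [sum_coe_sort P fun p : Nat.Primes => Real.log ((p - 1 : ℕ) : ℝ), totient_modulus,
      Nat.cast_prod, Real.log_prod fun p _ => mod_cast (Nat.sub_pos_of_lt p.2.one_lt).ne']
  rw [tableWeight, Nat.cast_prod, Real.log_prod fun p _ => mod_cast hpair p, Nat.cast_pow,
    Real.log_pow, htotient, mul_sum, weight, weight, ← sum_add_distrib, ← sum_add_distrib]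
  exact sum_congr rfl fun p _ => log_pairWeight (hpair p)

lemma isScaledTable_tableWeight :
    IsScaledTable (tableWeight (P := P)) ((modulus P).totient ^ 2) (weight 0) where
  sum_row := sum_tableWeight
  sum_col s := by simp only [tableWeight_comm _ s, sum_tableWeight]
  log_eq _ _ := log_tableWeight

lemma compatible_of_tableWeight_ne_zero {r s : Residues P} (h : tableWeight r s ≠ 0) :
    Compatible r s := fun p hp =>
  h (prod_eq_zero (mem_univ p) (by simp [pairWeight, hp.1, hp.2]))

end LimitingTable

section BalancedPermutation

variable (P : Finset Nat.Primes)

/-- The number of pairs `(i, finRotate k i)` with given residues, which fills up the limiting table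
for an `n` that is not a multiple of the sum of its entries. -/
def remainderTable (k : ℕ) (r s : Residues P) : ℕ :=
  #(fiber (fun i => (residueOf P k i, residueOf P k (finRotate k i))) (r, s))

variable {P}

lemma sum_remainderTable_row (k : ℕ) (r : Residues P) :
    ∑ s, remainderTable P k r s = #(fiber (residueOf P k) r) := by
  refine Eq.trans ?_ (card_fiber_comp
    (fun i => (residueOf P k i, residueOf P k (finRotate k i))) Prod.fst r).symm
  simp only [sum_filter, Fintype.sum_prod_type_right, remainderTable, sum_ite_eq', mem_univ,
    if_true]

lemma sum_remainderTable_col (k : ℕ) (s : Residues P) :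
    ∑ r, remainderTable P k r s = #(fiber (residueOf P k) s) := by
  refine Eq.trans ?_ ((card_fiber_comp
    (fun i => (residueOf P k i, residueOf P k (finRotate k i))) Prod.snd s).symm.trans
      (card_fiber_comp_perm (residueOf P k) (finRotate k) s))
  simp only [sum_filter, Fintype.sum_prod_type, remainderTable, sum_ite_eq', mem_univ, if_true]

lemma compatible_of_remainderTable_ne_zero {k : ℕ} {r s : Residues P}
    (h : remainderTable P k r s ≠ 0) : Compatible r s := by
  rw [remainderTable, card_ne_zero] at h
  obtain ⟨i, hi⟩ := h
  rw [mem_fiber, Prod.mk.injEq] at hi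
  rw [← hi.1, ← hi.2]
  exact compatible_residueOf_of_mem_coprimePerms (finRotate_mem_coprimePerms k) i

lemma sum_sum_remainderTable (k : ℕ) : ∑ r, ∑ s, remainderTable P k r s = k := by
  simp only [sum_remainderTable_row, sum_card_fiber, Fintype.card_fin]

/-- The sum of the entries of the limiting table. -/
def tableSize (P : Finset Nat.Primes) : ℕ := modulus P * (modulus P).totient ^ 2

/-- The numbers of elements of one residue class that a balanced permutation of `{1, …, n}` sends
to another one. -/
def balancedTable (P : Finset Nat.Primes) (n : ℕ) (r s : Residues P) : ℕ :=
  n / tableSize P * tableWeight r s + remainderTable P (n % tableSize P) r s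

lemma compatible_of_balancedTable_ne_zero {n : ℕ} {r s : Residues P}
    (h : balancedTable P n r s ≠ 0) : Compatible r s := by
  by_cases ht : tableWeight r s = 0
  · exact compatible_of_remainderTable_ne_zero (by simpa [balancedTable, ht] using h)
  · exact compatible_of_tableWeight_ne_zero ht

lemma card_fiber_residueOf_eq (n : ℕ) (r : Residues P) :
    #(fiber (residueOf P n) r) = n / tableSize P * (modulus P).totient ^ 2 +
      #(fiber (residueOf P (n % tableSize P)) r) := by
  rw [← card_fiber_residueOf_add, mul_left_comm, mul_comm (n / _), ← tableSize, Nat.div_add_mod]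

lemma exists_perm_card_fiber_eq_balancedTable (P : Finset Nat.Primes) (n : ℕ) :
    ∃ θ : Equiv.Perm (Fin n), ∀ r s,
      #(fiber (fun i => (residueOf P n i, residueOf P n (θ i))) (r, s)) =
        balancedTable P n r s := by
  refine exists_perm_card_fiber_pair_eq _ _ (fun r => ?_) fun s => ?_
  · simp only [balancedTable, sum_add_distrib, ← mul_sum, isScaledTable_tableWeight.sum_row,
      sum_remainderTable_row, card_fiber_residueOf_eq n]
  · simp only [balancedTable, sum_add_distrib, ← mul_sum, isScaledTable_tableWeight.sum_col,
      sum_remainderTable_col, card_fiber_residueOf_eq n]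

lemma compatible_of_card_fiber_eq_balancedTable {n : ℕ} {θ : Equiv.Perm (Fin n)}
    (hθ : ∀ r s, #(fiber (fun i => (residueOf P n i, residueOf P n (θ i))) (r, s)) =
      balancedTable P n r s) (i : Fin n) :
    Compatible (residueOf P n i) (residueOf P n (θ i)) :=
  compatible_of_balancedTable_ne_zero <| by
    rw [← hθ]
    exact (card_fiber_pos (fun i => (residueOf P n i, residueOf P n (θ i))) i).ne'

end BalancedPermutation

section LargePrimes

/-- The primes up to `K`. -/
def primesUpTo (K : ℕ) : Finset Nat.Primes := (range (K + 1)).subtype Nat.Prime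

variable {K : ℕ}

lemma mem_primesUpTo {p : Nat.Primes} : p ∈ primesUpTo K ↔ (p : ℕ) ≤ K :=
  (mem_subtype (p := Nat.Prime) (a := p)).trans (mem_range.trans Nat.lt_succ_iff)

lemma modulus_primesUpTo_le (K : ℕ) : modulus (primesUpTo K) ≤ 4 ^ K :=
  (prod_subtype_eq_prod_filter (s := range (K + 1)) (p := Nat.Prime) id).trans_le
    (primorial_le_four_pow K)

/-- The numbers `k` and `l` have a common prime factor exceeding `K`. -/
def SharesLargePrime (K k l : ℕ) : Prop := ∃ p ∈ (k.gcd l).primeFactors, K < p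

instance (K k l : ℕ) : Decidable (SharesLargePrime K k l) :=
  inferInstanceAs (Decidable (∃ p ∈ (k.gcd l).primeFactors, K < p))

lemma sharesLargePrime_comm {k l : ℕ} : SharesLargePrime K k l ↔ SharesLargePrime K l k := by
  rw [SharesLargePrime, Nat.gcd_comm, SharesLargePrime]

lemma gcd_eq_one_of_compatible {k l : ℕ}
    (h : Compatible (residue (primesUpTo K) k) (residue (primesUpTo K) l)) (hk : k ≠ 0)
    (h' : ¬ SharesLargePrime K k l) : Nat.gcd k l = 1 := by
  by_contra hne
  obtain ⟨p, hp, hpkl⟩ := Nat.exists_prime_and_dvd hne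
  have hpK : p ≤ K := not_lt.1 fun hK =>
    h' ⟨p, Nat.mem_primeFactors.2 ⟨hp, hpkl, Nat.gcd_ne_zero_left hk⟩, hK⟩
  exact h ⟨⟨p, hp⟩, mem_primesUpTo.2 hpK⟩
    ⟨residue_apply_eq_zero_iff.2 (hpkl.trans (Nat.gcd_dvd_left k l)),
      residue_apply_eq_zero_iff.2 (hpkl.trans (Nat.gcd_dvd_right k l))⟩

lemma card_primeFactors_filter_lt_le {k : ℕ} (hK : 2 ≤ K) (hk : k ≠ 0) :
    #{p ∈ k.primeFactors | K < p} ≤ Nat.log K k :=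
  Nat.le_log_of_pow_le hK <|
    calc K ^ #{p ∈ k.primeFactors | K < p} ≤ ∏ p ∈ k.primeFactors with K < p, p :=
          pow_card_le_prod _ _ _ fun _ hp => (mem_filter.1 hp).2.le
      _ ≤ k := Nat.le_of_dvd hk.bot_lt
          ((prod_dvd_prod_of_subset _ _ _ (filter_subset _ _)).trans (Nat.prod_primeFactors_dvd k))

lemma card_multiples_fiber_residueOf_le {p : ℕ} (hp : p.Prime) (hKp : K < p) (n : ℕ)
    (s : Residues (primesUpTo K)) :
    #{v ∈ fiber (residueOf (primesUpTo K) n) s | p ∣ v.1 + 1} ≤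
      n / (modulus (primesUpTo K) * p) + 1 := by
  let Q := modulus (primesUpTo K)
  have hcop : Nat.Coprime Q p := Nat.Coprime.prod_left fun q hq =>
    (Nat.coprime_primes q.2 hp).2 ((mem_primesUpTo.1 hq).trans_lt hKp).ne
  rw [← card_range (n / (Q * p) + 1)]
  refine card_le_card_of_injOn (fun v => (v : ℕ) / (Q * p)) (fun v _ => ?_) fun v hv w hw hvw => ?_
  · rw [coe_range, Set.mem_Iio, Nat.lt_succ_iff]
    exact Nat.div_le_div_right v.2.le
  · rw [mem_coe, mem_filter, mem_fiber] at hv hw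
    have hmodQ : v.1 + 1 ≡ w.1 + 1 [MOD Q] := residue_eq_iff.1 (hv.1.trans hw.1.symm)
    have hmodp : v.1 + 1 ≡ w.1 + 1 [MOD p] :=
      (Nat.modEq_zero_iff_dvd.2 hv.2).trans (Nat.modEq_zero_iff_dvd.2 hw.2).symm
    have hmod : v.1 ≡ w.1 [MOD Q * p] :=
      Nat.ModEq.add_right_cancel' 1 ((Nat.modEq_and_modEq_iff_modEq_mul hcop).1 ⟨hmodQ, hmodp⟩)
    refine Fin.ext ?_
    rw [← Nat.div_add_mod v.1 (Q * p), ← Nat.div_add_mod w.1 (Q * p), hmod]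
    exact congrArg (Q * p * · + w.1 % (Q * p)) hvw

/-- A bound for the number of elements of a residue class modulo the primes up to `K` that share a
larger prime factor with a given number up to `n`. -/
def conflictBound (K n : ℕ) : ℕ := Nat.log K n * (n / (modulus (primesUpTo K) * K) + 1)

lemma card_sharesLargePrime_fiber_residueOf_le {n k : ℕ} (hK : 2 ≤ K) (hk : k ≠ 0) (hkn : k ≤ n)
    (s : Residues (primesUpTo K)) :
    #{v ∈ fiber (residueOf (primesUpTo K) n) s | SharesLargePrime K k (v.1 + 1)} ≤
      conflictBound K n := by
  have hcover : {v ∈ fiber (residueOf (primesUpTo K) n) s | SharesLargePrime K k (v.1 + 1)} ⊆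
      {p ∈ k.primeFactors | K < p}.biUnion fun p =>
        {v ∈ fiber (residueOf (primesUpTo K) n) s | p ∣ v.1 + 1} := fun v hv => by
    obtain ⟨hvs, p, hp, hKp⟩ := mem_filter.1 hv
    obtain ⟨hp, hpgcd, -⟩ := Nat.mem_primeFactors.1 hp
    exact mem_biUnion.2
      ⟨p, mem_filter.2 ⟨Nat.mem_primeFactors.2 ⟨hp, hpgcd.trans (Nat.gcd_dvd_left _ _), hk⟩, hKp⟩,
        mem_filter.2 ⟨hvs, hpgcd.trans (Nat.gcd_dvd_right _ _)⟩⟩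
  refine (card_le_card hcover).trans <| (card_biUnion_le_card_mul _ _
    (n / (modulus (primesUpTo K) * K) + 1) fun p hp => ?_).trans <|
      Nat.mul_le_mul_right _ <|
        (card_primeFactors_filter_lt_le hK hk).trans (Nat.log_mono_right hkn)
  rw [mem_filter] at hp
  have hQ := modulus_pos (primesUpTo K)
  refine (card_multiples_fiber_residueOf_le (Nat.prime_of_mem_primeFactors hp.1) hp.2 n s).trans ?_
  gcongr
  exact hp.2.le

end LargePrimes

section LowerBound

variable {K n : ℕ}

lemma mul_mem_coprimePerms {θ : Equiv.Perm (Fin n)}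
    (hθ : ∀ i, Compatible (residueOf (primesUpTo K) n i) (residueOf (primesUpTo K) n (θ i)))
    {a b : Equiv.Perm (Fin n)} (ha : a ∈ fiberPerms (residueOf (primesUpTo K) n))
    (hb : b ∈ fiberPerms (residueOf (primesUpTo K) n))
    (hab : ∀ i, ¬ SharesLargePrime K (i.1 + 1) (((b * (θ * a)) i).1 + 1)) :
    b * (θ * a) ∈ coprimePerms n := by
  rw [mem_fiberPerms] at ha hb
  refine mem_coprimePerms.2 fun i => gcd_eq_one_of_compatible ?_ i.1.succ_ne_zero (hab i)
  have hcompat := hθ (a i)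
  rwa [ha i, ← hb (θ (a i))] at hcompat

lemma sq_card_fiberPerms_residueOf_le {θ : Equiv.Perm (Fin n)} {Δ D : ℕ} (hK : 2 ≤ K)
    (hθ : ∀ i, Compatible (residueOf (primesUpTo K) n i) (residueOf (primesUpTo K) n (θ i)))
    (hΔ : 0 < Δ) (hΔm : Δ + 2 * D ≤ n / modulus (primesUpTo K)) (hD : conflictBound K n ≤ D)
    (htail : 2 * (n : ℝ) * Real.exp (2 * conflictBound K n) ≤ 2 ^ D) :
    (#(fiberPerms (residueOf (primesUpTo K) n)) : ℝ) ^ 2 ≤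
      2 * #(fiberPerms fun i => (residueOf (primesUpTo K) n i, residueOf (primesUpTo K) n (θ i))) *
        #(coprimePerms n) * Real.exp (n * D / Δ) := by
  have hm : 1 ≤ n / modulus (primesUpTo K) := by omega
  have hconflict (u : Fin n) (s : Residues (primesUpTo K)) :=
    card_sharesLargePrime_fiber_residueOf_le hK u.1.succ_ne_zero u.2 s
  have h := sq_card_fiberPerms_le (τ := residueOf (primesUpTo K) n)
    (bad := fun u v => SharesLargePrime K (u + 1) (v + 1)) θ
    (fun a ha b hb => mul_mem_coprimePerms hθ ha hb) hΔ hΔm hD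
    (fun x => div_le_card_fiber_residueOf n _)
    (fun x => (card_fiber_residueOf_le n _).trans (by omega))
    hconflict (fun v s => by simpa only [sharesLargePrime_comm] using hconflict v s)
    (by rwa [Fintype.card_fin])
  rwa [Fintype.card_fin] at h

/-- The limiting table contributes the Euler product, and switching costs `n * D / Δ`. -/
lemma log_factorial_add_le_log_card_coprimePerms {Δ D : ℕ} (hK : 2 ≤ K)
    (hΔ : 0 < Δ) (hΔm : Δ + 2 * D ≤ n / modulus (primesUpTo K)) (hD : conflictBound K n ≤ D)
    (htail : 2 * (n : ℝ) * Real.exp (2 * conflictBound K n) ≤ 2 ^ D) :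
    Real.log n.factorial + n * Real.log (∏ p ∈ primesUpTo K, eulerFactor 0 p) ≤
      Real.log #(coprimePerms n) + Real.log 2 + n * D / Δ +
        (modulus (primesUpTo K) ^ 2 + 2 * (n % tableSize (primesUpTo K) : ℕ) + 1) *
          (1 + Real.log n) := by
  have hm : 0 < n / modulus (primesUpTo K) := by omega
  have hQn : modulus (primesUpTo K) ≤ n := (Nat.div_pos_iff.1 hm).2
  have : NeZero n := ⟨((modulus_pos _).trans_le hQn).ne'⟩
  obtain ⟨θ, hθ⟩ := exists_perm_card_fiber_eq_balancedTable (primesUpTo K) n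
  have hentropy := isScaledTable_tableWeight.log_factorial_add_le_log_card hθ
    (by rwa [card_residues, Fintype.card_fin])
    (Real.log_nonpos (prod_eulerFactor_pos le_rfl _).le (prod_eulerFactor_zero_le_one _))
    (by rw [card_residues]; exact modulus_mul_log_prod_eulerFactor le_rfl (primesUpTo K))
  rw [Fintype.card_fin, card_residues, sum_sum_remainderTable] at hentropy
  have hpair : (0 : ℝ) < #(fiberPerms fun i =>
      (residueOf (primesUpTo K) n i, residueOf (primesUpTo K) n (θ i))) :=
    mod_cast card_fiberPerms_pos _
  have hC : (0 : ℝ) < #(coprimePerms n) := mod_cast card_coprimePerms_pos n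
  have hF : (0 : ℝ) < #(fiberPerms (residueOf (primesUpTo K) n)) := mod_cast card_fiberPerms_pos _
  have hswitch := Real.log_le_log (by positivity) <| sq_card_fiberPerms_residueOf_le hK
    (compatible_of_card_fiber_eq_balancedTable hθ) hΔ hΔm hD htail
  rw [Real.log_mul (by positivity) (by positivity), Real.log_mul (by positivity) (by positivity),
    Real.log_mul (by positivity) (by positivity), Real.log_exp, Real.log_pow] at hswitch
  push_cast at hswitch
  linarith

end LowerBound

section Cutoff

lemma log_mul_log_le_log (b k n : ℕ) : Nat.log b k * Nat.log k n ≤ Nat.log b n := by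
  rcases eq_or_ne n 0 with rfl | hn
  · simp only [Nat.log_zero_right, mul_zero, le_refl]
  rcases eq_or_ne k 0 with rfl | hk
  · simp only [Nat.log_zero_right, zero_mul, zero_le]
  rcases le_or_gt b 1 with hb | hb
  · simp only [Nat.log_of_left_le_one hb, zero_mul, le_refl]
  refine Nat.le_log_of_pow_le hb ?_
  calc b ^ (Nat.log b k * Nat.log k n) = (b ^ Nat.log b k) ^ Nat.log k n := pow_mul _ _ _
    _ ≤ k ^ Nat.log k n := Nat.pow_le_pow_left (Nat.pow_log_le_self b hk) _
    _ ≤ n := Nat.pow_log_le_self k hn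

/-- The bound `K ≈ (log₂ n) / 16` for the primes treated by residue classes: small enough that
their product is at most `n ^ (1 / 8)`, and of larger order than the number of prime factors
exceeding `K` of any number up to `n`. -/
def primeCutoff (n : ℕ) : ℕ := Nat.log 2 n / 16

variable {n : ℕ}

lemma two_pow_mul_primeCutoff_le (hn : n ≠ 0) : 2 ^ (16 * primeCutoff n) ≤ n :=
  Nat.pow_le_of_le_log hn (Nat.mul_div_le _ _)

lemma log_two_le_mul_primeCutoff (hK : 0 < primeCutoff n) : Nat.log 2 n ≤ 32 * primeCutoff n := by
  unfold primeCutoff at *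
  omega

lemma ne_zero_of_primeCutoff_pos (hK : 0 < primeCutoff n) : n ≠ 0 := by
  rintro rfl
  exact hK.ne' (by rw [primeCutoff, Nat.log_zero_right, Nat.zero_div])

lemma modulus_primesUpTo_primeCutoff_pow_le (hn : n ≠ 0) :
    modulus (primesUpTo (primeCutoff n)) ^ 8 ≤ n :=
  calc modulus (primesUpTo (primeCutoff n)) ^ 8 ≤ (4 ^ primeCutoff n) ^ 8 :=
        Nat.pow_le_pow_left (modulus_primesUpTo_le _) 8
    _ = 2 ^ (16 * primeCutoff n) := by rw [← pow_mul, show 4 = 2 ^ 2 from rfl, ← pow_mul]; ring_nf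
    _ ≤ n := two_pow_mul_primeCutoff_le hn

lemma log_two_mul_primeCutoff_le (hK : 0 < primeCutoff n) :
    Nat.log 2 n * primeCutoff n ≤ n / modulus (primesUpTo (primeCutoff n)) := by
  have hpow : primeCutoff n ≤ 2 ^ primeCutoff n := Nat.lt_two_pow_self.le
  rw [Nat.le_div_iff_mul_le (modulus_pos _)]
  calc Nat.log 2 n * primeCutoff n * modulus (primesUpTo (primeCutoff n))
      ≤ 32 * 2 ^ primeCutoff n * 2 ^ primeCutoff n * 4 ^ primeCutoff n := by
        gcongr
        exacts [(log_two_le_mul_primeCutoff hK).trans (Nat.mul_le_mul_left _ hpow),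
          modulus_primesUpTo_le _]
    _ = 2 ^ (4 * primeCutoff n + 5) := by
        rw [show 4 = 2 ^ 2 from rfl, ← pow_mul]
        ring
    _ ≤ 2 ^ (16 * primeCutoff n) := Nat.pow_le_pow_right two_pos (by omega)
    _ ≤ n := two_pow_mul_primeCutoff_le (ne_zero_of_primeCutoff_pos hK)

lemma conflictBound_eq (K n : ℕ) :
    conflictBound K n = Nat.log K n * (n / modulus (primesUpTo K) / K + 1) := by
  rw [conflictBound, Nat.div_div_eq_div_mul]

lemma log_two_lt_conflictBound (hK : 2 ≤ primeCutoff n) :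
    Nat.log 2 n < conflictBound (primeCutoff n) n := by
  have hKn : primeCutoff n ≤ n := (Nat.div_le_self _ _).trans (Nat.log_le_self 2 n)
  rw [conflictBound_eq]
  exact (Nat.lt_succ_of_le ((Nat.le_div_iff_mul_le (by omega)).2
    (log_two_mul_primeCutoff_le (by omega)))).trans_le
      (Nat.le_mul_of_pos_left _ (Nat.log_pos hK hKn))

lemma log_primeCutoff_mul_conflictBound_le (hK : 2 ≤ primeCutoff n) :
    Nat.log 2 (primeCutoff n) * conflictBound (primeCutoff n) n ≤
      64 * (n / modulus (primesUpTo (primeCutoff n))) := by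
  let m := n / modulus (primesUpTo (primeCutoff n))
  have hlog : 2 ≤ Nat.log 2 n := hK.trans (Nat.div_le_self _ _)
  have hKm : primeCutoff n ≤ m :=
    (Nat.le_mul_of_pos_left _ (two_pos.trans_le hlog)).trans (log_two_mul_primeCutoff_le (by omega))
  calc Nat.log 2 (primeCutoff n) * conflictBound (primeCutoff n) n
      = Nat.log 2 (primeCutoff n) * Nat.log (primeCutoff n) n * (m / primeCutoff n + 1) := by
        rw [conflictBound_eq, mul_assoc]
    _ ≤ 32 * primeCutoff n * (m / primeCutoff n + 1) :=
        Nat.mul_le_mul_right _ <|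
          (log_mul_log_le_log _ _ _).trans (log_two_le_mul_primeCutoff (by omega))
    _ = 32 * (primeCutoff n * (m / primeCutoff n) + primeCutoff n) := by ring
    _ ≤ 32 * (m + m) := by
        gcongr
        exact Nat.mul_div_le _ _
    _ = 64 * m := by ring

end Cutoff

section Asymptotics

variable {n : ℕ}

lemma two_mul_exp_le_two_pow {B : ℕ} (hn : n ≤ 2 ^ (B + 1)) (hB : 2 ≤ B) :
    2 * (n : ℝ) * Real.exp (2 * B) ≤ 2 ^ (6 * B) := by
  have hexp : Real.exp (2 * B) ≤ (2 ^ 2) ^ (2 * B) := by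
    rw [show (2 * B : ℝ) = (2 * B : ℕ) * 1 by push_cast; ring, Real.exp_nat_mul]
    exact pow_le_pow_left₀ (Real.exp_pos _).le (by linarith [Real.exp_one_lt_d9]) _
  calc 2 * (n : ℝ) * Real.exp (2 * B) ≤ 2 * 2 ^ (B + 1) * (2 ^ 2) ^ (2 * B) := by
        gcongr
        exact_mod_cast hn
    _ = 2 ^ (5 * B + 2) := by rw [← pow_mul]; ring
    _ ≤ 2 ^ (6 * B) := pow_le_pow_right₀ one_le_two (by omega)

lemma sq_modulus_add_mod_tableSize_le (hn : n ≠ 0) :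
    (modulus (primesUpTo (primeCutoff n)) : ℝ) ^ 2 +
      2 * (n % tableSize (primesUpTo (primeCutoff n)) : ℕ) + 1 ≤ 4 * √n := by
  let Q := modulus (primesUpTo (primeCutoff n))
  have hQ : (1 : ℝ) ≤ Q := mod_cast modulus_pos _
  have hsqrt : (Q : ℝ) ^ 4 ≤ √n := Real.le_sqrt_of_sq_le <| by
    rw [← pow_mul]
    exact_mod_cast modulus_primesUpTo_primeCutoff_pow_le hn
  have hmod : ((n % tableSize (primesUpTo (primeCutoff n)) : ℕ) : ℝ) ≤ (Q : ℝ) ^ 3 := by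
    have hpos : 0 < tableSize (primesUpTo (primeCutoff n)) :=
      Nat.mul_pos (modulus_pos _) (pow_pos (Nat.totient_pos.2 (modulus_pos _)) 2)
    have hle : tableSize (primesUpTo (primeCutoff n)) ≤ Q ^ 3 :=
      (Nat.mul_le_mul_left _ (Nat.pow_le_pow_left (Nat.totient_le _) 2)).trans_eq (by ring)
    exact_mod_cast (Nat.mod_lt n hpos).le.trans hle
  linarith [pow_le_pow_right₀ hQ (show 2 ≤ 4 by norm_num),
    pow_le_pow_right₀ hQ (show 3 ≤ 4 by norm_num), one_le_pow₀ hQ (n := 4)]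

/-- The loss per element in the lower bound for `logRate`. -/
noncomputable def lowerError (n : ℕ) : ℝ :=
  768 / Nat.log 2 (primeCutoff n) + (Real.log 2 + 4 * √n * (1 + Real.log n)) / n

lemma log_prod_eulerFactor_le_logRate_add (hn : 1536 ≤ Nat.log 2 (primeCutoff n)) :
    Real.log (∏ p ∈ primesUpTo (primeCutoff n), eulerFactor 0 p) ≤ logRate n + lowerError n := by
  have hK : 2 ≤ primeCutoff n := (hn.trans (Nat.log_le_self _ _)).trans' (by norm_num)
  have hn0 : n ≠ 0 := ne_zero_of_primeCutoff_pos (by omega)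
  let B := conflictBound (primeCutoff n) n
  let m := n / modulus (primesUpTo (primeCutoff n))
  have hBlog : Nat.log 2 n < B := log_two_lt_conflictBound hK
  have hlogB : Nat.log 2 (primeCutoff n) * B ≤ 64 * m := log_primeCutoff_mul_conflictBound_le hK
  have hlog : 2 ≤ Nat.log 2 n := hK.trans (Nat.div_le_self _ _)
  have hBm : 1536 * B ≤ 64 * m := (Nat.mul_le_mul_right B hn).trans hlogB
  have hnB : n ≤ 2 ^ (B + 1) := (Nat.lt_pow_succ_log_self one_lt_two n).le.trans
    (Nat.pow_le_pow_right two_pos (by omega))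
  obtain ⟨Δ, hΔ⟩ : ∃ Δ, m = Δ + 2 * (6 * B) := Nat.exists_eq_add_of_le' (by omega)
  have hΔ0 : 0 < Δ := by omega
  have hbound := log_factorial_add_le_log_card_coprimePerms hK hΔ0 hΔ.ge
    (Nat.le_mul_of_pos_left B (by norm_num)) (two_mul_exp_le_two_pow hnB (by omega))
  have hswitch : ((6 * B : ℕ) : ℝ) / Δ ≤ 768 / Nat.log 2 (primeCutoff n) := by
    rw [div_le_div_iff₀ (by exact_mod_cast hΔ0) (by exact_mod_cast hn.trans_lt' (by norm_num))]
    have hle : 6 * B * Nat.log 2 (primeCutoff n) ≤ 768 * Δ := by nlinarith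
    exact_mod_cast hle
  have hround := mul_le_mul_of_nonneg_right (sq_modulus_add_mod_tableSize_le hn0)
    (add_nonneg zero_le_one (Real.log_natCast_nonneg n))
  have hn' : (0 : ℝ) < n := mod_cast hn0.bot_lt
  have hswitch' := mul_le_mul_of_nonneg_left hswitch hn'.le
  rw [logRate, lowerError, add_left_comm, ← add_div, ← sub_le_iff_le_add', le_div_iff₀' hn',
    mul_sub]
  rw [mul_div_assoc] at hbound
  linarith

lemma tendsto_natLog_atTop {b : ℕ} (hb : 1 < b) : Tendsto (Nat.log b) atTop atTop :=
  tendsto_atTop_atTop.2 fun k => ⟨b ^ k, fun _ hn => Nat.le_log_of_pow_le hb hn⟩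

lemma tendsto_log_primeCutoff : Tendsto (fun n => Nat.log 2 (primeCutoff n)) atTop atTop :=
  (tendsto_natLog_atTop one_lt_two).comp <|
    (Nat.tendsto_div_const_atTop (by norm_num)).comp (tendsto_natLog_atTop one_lt_two)

lemma tendsto_lowerError : Tendsto lowerError atTop (nhds 0) := by
  have hswitch : Tendsto (fun n => (768 : ℝ) / Nat.log 2 (primeCutoff n)) atTop (nhds 0) :=
    (tendsto_natCast_atTop_atTop.comp tendsto_log_primeCutoff).const_div_atTop 768
  have hsqrt : Tendsto (fun n : ℕ => (√n)⁻¹) atTop (nhds 0) :=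
    (Real.tendsto_sqrt_atTop.comp tendsto_natCast_atTop_atTop).inv_tendsto_atTop
  have hlog : Tendsto (fun n : ℕ => Real.log n / √n) atTop (nhds 0) := by
    simpa only [Real.sqrt_eq_rpow, Function.comp_def] using
      (isLittleO_log_rpow_atTop (r := 1 / 2) (by norm_num)).tendsto_div_nhds_zero.comp
        tendsto_natCast_atTop_atTop
  have hround := (tendsto_const_div_atTop_nhds_zero_nat (Real.log 2)).add
    ((hsqrt.add hlog).const_mul 4)
  have hsum := hswitch.add hround
  simp only [mul_zero, add_zero] at hsum
  refine hsum.congr fun n => ?_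
  rw [lowerError, add_div, mul_right_comm, mul_div_assoc, Real.sqrt_div_self']
  ring

lemma eventually_lt_logRate {v : ℝ} (hc : 0 < coprimeConst) (hv : v < Real.log coprimeConst) :
    ∀ᶠ n in atTop, v < logRate n := by
  filter_upwards [tendsto_lowerError.eventually_lt_const (sub_pos.2 hv),
    tendsto_log_primeCutoff.eventually_ge_atTop 1536] with n herr hn
  have hle := (Real.log_le_log hc (coprimeConst_le_prod_eulerFactor_zero _)).trans
    (log_prod_eulerFactor_le_logRate_add hn)
  linarith

end Asymptotics

end CoprimePerm

/-- Pomerance's conjecture: `(C(n)/n!)^{1/n} → c` as `n → ∞`. -/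
theorem coprimePermCount_tendsto :
    Filter.Tendsto (fun n : ℕ => ((coprimePermCount n : ℝ) / (n.factorial : ℝ)) ^ ((n : ℝ)⁻¹))
      Filter.atTop (nhds coprimeConst) := by
  simp only [CoprimePerm.coprimePermCount_div_factorial_rpow]
  refine tendsto_order.2 ⟨fun u hu => ?_, fun u hu => ?_⟩
  · rcases le_or_gt u 0 with hu0 | hu0
    · exact Eventually.of_forall fun n => hu0.trans_lt (Real.exp_pos _)
    · filter_upwards [CoprimePerm.eventually_lt_logRate (hu0.trans hu) (Real.log_lt_log hu0 hu)]
        with n hn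
      exact (Real.log_lt_iff_lt_exp hu0).1 hn
  · obtain ⟨P, hP⟩ := (CoprimePerm.hasProd_eulerFactor_zero.eventually_lt_const hu).exists
    have hPpos := CoprimePerm.prod_eulerFactor_pos le_rfl P
    filter_upwards [CoprimePerm.eventually_logRate_lt P (Real.log_lt_log hPpos hP)] with n hn
    exact (Real.lt_log_iff_exp_lt (hPpos.trans hP)).1 hn
end

section
/- For all sufficiently large n and every S ⊆ 𝒫_W with |S| < k, one has |A_S| = (1 ± α²)·n·∏_{p ∈ S} p^{−1}·∏_{p ∈ 𝒫_W \ S} (1 − p^{−1}); that is, |A_S| lies between (1 − α²) and (1 + α²) times n·∏_{p ∈ S} p^{−1}·∏_{p ∈ 𝒫_W \ S} (1 − p^{−1}). -/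
open Real Filter

/-- `W = W(n) = exp(2^{-10} (log n · log log n)^{1/2})`. -/
noncomputable def Wp (n : ℕ) : ℝ :=
  Real.exp ((2 : ℝ) ^ (-10 : ℤ) * Real.sqrt (Real.log n * Real.log (Real.log n)))

/-- `k = k(n) = 2^{-5} (log n / log log n)^{1/2}`. -/
noncomputable def kp (n : ℕ) : ℝ :=
  (2 : ℝ) ^ (-5 : ℤ) * Real.sqrt (Real.log n / Real.log (Real.log n))

/-- `α = α(n) = exp(−k log k)`. -/
noncomputable def ap (n : ℕ) : ℝ := Real.exp (-(kp n * Real.log (kp n)))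

/-- `𝒫_W`: the set of primes `p ≤ W(n)`. -/
noncomputable def primesLe (n : ℕ) : Set ℕ := {p : ℕ | p.Prime ∧ (p : ℝ) ≤ Wp n}

/-- `A_S`: the set of `m ∈ {1,…,n}` whose set of prime divisors in `𝒫_W` is exactly `S`. -/
noncomputable def ASet (n : ℕ) (S : Set ℕ) : Set ℕ :=
  {m : ℕ | 1 ≤ m ∧ m ≤ n ∧ ∀ p ∈ primesLe n, (p ∣ m ↔ p ∈ S)}

/-!
The elements of `A_S` are the multiples of `D = ∏_{p ∈ S} p` in `[n]` that avoid every prime of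
`Q = 𝒫_W \ S`, so they can be counted by Brun's pure sieve: inclusion–exclusion over the subsets of
`Q`, truncated at size `r ≈ 16 k`. Each of the at most `e W ^ r` subsets used costs a rounding error
of at most `1`, and `W ^ r` is far smaller than `n / D`. The truncation costs `n / D` times the sum
of `∏_{p ∈ U} p⁻¹` over the `U ⊆ Q` of size at least `r`, which Rankin's trick with `y = √k` bounds
by `exp (√k ∑ p⁻¹) / √k ^ r`. As `∑ p⁻¹ = O(log k)`, by Chebyshev's bound on dyadic blocks, this is
`exp (-(8 + o(1)) k log k)`, against the allowed `α² = exp (-2 k log k)`; the sifted density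
`∏ (1 - p⁻¹)` is at least a fixed negative power of `k`, so it does no harm.
-/

section Bonferroni

open Finset

theorem prod_one_sub_eq_sum_powerset {κ R : Type*} [CommRing R] (Q : Finset κ) (f : κ → R) :
    ∏ q ∈ Q, (1 - f q) = ∑ U ∈ Q.powerset, (-1) ^ #U * ∏ q ∈ U, f q := by
  simp_rw [sub_eq_add_neg, prod_one_add, prod_neg]

theorem sum_powerset_card_lt_apply_card {κ M : Type*} [AddCommMonoid M] (T : Finset κ) (r : ℕ)
    (f : ℕ → M) :
    ∑ U ∈ T.powerset with #U < r, f #U = ∑ j ∈ range r, (#T).choose j • f j := by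
  rw [← sum_fiberwise_of_maps_to (t := range r) (g := card) (by simp)]
  refine sum_congr rfl fun j hj => ?_
  have hfiber : {U ∈ {U ∈ T.powerset | #U < r} | #U = j} = powersetCard j T := by
    ext U
    simp only [mem_filter, mem_powerset, mem_powersetCard, mem_range] at *
    grind
  rw [hfiber, ← card_powersetCard, ← sum_const]
  exact sum_congr rfl fun U hU => by rw [(mem_powersetCard.1 hU).2]

theorem abs_ite_sub_alternating_sum_range_choose_le (t r : ℕ) :
    |(if t = 0 then 1 else 0 : ℤ) - ∑ j ∈ range r, (-1) ^ j * (t.choose j : ℤ)| ≤ t.choose r := by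
  rcases r with _ | r
  · rw [range_zero, sum_empty, sub_zero, Nat.choose_zero_right, Nat.cast_one]
    split_ifs <;> simp
  rcases t with _ | t
  · simp [sum_range_succ']
  · rw [Int.alternating_sum_range_choose_eq_choose, if_neg t.succ_ne_zero, zero_sub, abs_neg,
      abs_mul, abs_pow, abs_neg, abs_one, one_pow, one_mul, Nat.abs_cast, Nat.choose_succ_succ]
    exact_mod_cast Nat.le_add_right _ _

variable {ι κ R : Type*} [CommRing R] [LinearOrder R] [IsStrictOrderedRing R]

theorem abs_ite_eq_empty_sub_sum_neg_one_pow_card_le [DecidableEq κ] (T : Finset κ) (r : ℕ) :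
    |(if T = ∅ then 1 else 0 : R) - ∑ U ∈ T.powerset with #U < r, (-1) ^ #U| ≤
      #(powersetCard r T) := by
  have h := abs_ite_sub_alternating_sum_range_choose_le #T r
  simp_rw [mul_comm, ← nsmul_eq_mul] at h
  rw [← sum_powerset_card_lt_apply_card T r fun j => (-1 : ℤ) ^ j, ← card_powersetCard] at h
  simp_rw [card_eq_zero] at h
  exact_mod_cast h

/-- Bonferroni's inequalities: truncated inclusion–exclusion is off by at most the first omitted
level. -/
theorem abs_sum_filter_forall_not_sub_le {M : Finset ι} (Q : Finset κ) (B : κ → ι → Prop)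
    [∀ q m, Decidable (B q m)] {a : ι → R} (ha : ∀ m ∈ M, 0 ≤ a m) (r : ℕ) :
    |∑ m ∈ M with ∀ q ∈ Q, ¬ B q m, a m -
        ∑ U ∈ Q.powerset with #U < r, (-1) ^ #U * ∑ m ∈ M with ∀ q ∈ U, B q m, a m| ≤
      ∑ U ∈ powersetCard r Q, ∑ m ∈ M with ∀ q ∈ U, B q m, a m := by
  classical
  let T (m : ι) : Finset κ := {q ∈ Q | B q m}
  have hsub (m : ι) (U : Finset κ) : U ⊆ T m ↔ U ⊆ Q ∧ ∀ q ∈ U, B q m := by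
    simp only [T, subset_iff, mem_filter]
    grind
  have hsifted : ∑ m ∈ M with ∀ q ∈ Q, ¬ B q m, a m =
      ∑ m ∈ M, (if T m = ∅ then 1 else 0) * a m := by
    simp [T, sum_filter, filter_eq_empty_iff]
  have hlow : ∑ U ∈ Q.powerset with #U < r, (-1) ^ #U * ∑ m ∈ M with ∀ q ∈ U, B q m, a m =
      ∑ m ∈ M, (∑ U ∈ (T m).powerset with #U < r, (-1) ^ #U) * a m := by
    simp_rw [mul_sum, sum_mul]
    refine sum_comm' fun U m => ?_
    simp only [mem_filter, mem_powerset, hsub]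
    tauto
  have hlevel : ∑ U ∈ powersetCard r Q, ∑ m ∈ M with ∀ q ∈ U, B q m, a m =
      ∑ m ∈ M, #(powersetCard r (T m)) * a m := by
    simp_rw [← nsmul_eq_mul, ← sum_const]
    refine sum_comm' fun U m => ?_
    simp only [mem_filter, mem_powersetCard, hsub]
    tauto
  rw [hsifted, hlow, hlevel, ← sum_sub_distrib]
  refine (abs_sum_le_sum_abs _ _).trans (sum_le_sum fun m hm => ?_)
  rw [← sub_mul, abs_mul, abs_of_nonneg (ha m hm)]
  exact mul_le_mul_of_nonneg_right (abs_ite_eq_empty_sub_sum_neg_one_pow_card_le _ _) (ha m hm)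

theorem abs_sum_low_sub_prod_one_sub_le {Q : Finset κ} {f : κ → R} (hf : ∀ q ∈ Q, 0 ≤ f q)
    (r : ℕ) :
    |∑ U ∈ Q.powerset with #U < r, (-1) ^ #U * ∏ q ∈ U, f q - ∏ q ∈ Q, (1 - f q)| ≤
      ∑ U ∈ Q.powerset with r ≤ #U, ∏ q ∈ U, f q := by
  rw [prod_one_sub_eq_sum_powerset, ← sum_filter_add_sum_filter_not Q.powerset (#· < r),
    sub_add_cancel_left, abs_neg]
  simp_rw [not_lt]
  refine (abs_sum_le_sum_abs _ _).trans (sum_le_sum fun U hU => ?_)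
  have hU0 : 0 ≤ ∏ q ∈ U, f q :=
    prod_nonneg fun q hq => hf q (mem_powerset.1 (mem_filter.1 hU).1 hq)
  rw [abs_mul, abs_pow, abs_neg, abs_one, one_pow, one_mul, abs_of_nonneg hU0]

/-- Brun's pure sieve. The tail of the product is lost twice: once in truncating it, and once in the
main term of the first omitted level of inclusion–exclusion. -/
theorem abs_sum_filter_forall_not_sub_mul_prod_le {M : Finset ι} {Q : Finset κ} {B : κ → ι → Prop}
    [∀ q m, Decidable (B q m)] {a : ι → R} (ha : ∀ m ∈ M, 0 ≤ a m) {X : R} (hX : 0 ≤ X)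
    {f : κ → R} (hf : ∀ q ∈ Q, 0 ≤ f q) {η : Finset κ → R}
    (hη : ∀ U ⊆ Q, |∑ m ∈ M with ∀ q ∈ U, B q m, a m - X * ∏ q ∈ U, f q| ≤ η U) (r : ℕ) :
    |∑ m ∈ M with ∀ q ∈ Q, ¬ B q m, a m - X * ∏ q ∈ Q, (1 - f q)| ≤
      2 * (X * ∑ U ∈ Q.powerset with r ≤ #U, ∏ q ∈ U, f q) +
        ∑ U ∈ Q.powerset with #U ≤ r, η U := by
  classical
  set g : Finset κ → R := fun U => ∑ m ∈ M with ∀ q ∈ U, B q m, a m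
  set V : Finset κ → R := fun U => ∏ q ∈ U, f q
  have hbonferroni := abs_sum_filter_forall_not_sub_le Q B ha r
  have hlow : |∑ U ∈ Q.powerset with #U < r, (-1) ^ #U * g U -
      X * ∑ U ∈ Q.powerset with #U < r, (-1) ^ #U * V U| ≤
      ∑ U ∈ Q.powerset with #U < r, η U := by
    rw [mul_sum, ← sum_sub_distrib]
    refine (abs_sum_le_sum_abs _ _).trans (sum_le_sum fun U hU => ?_)
    rw [mul_left_comm, ← mul_sub, abs_mul, abs_pow, abs_neg, abs_one, one_pow, one_mul]
    exact hη U (mem_powerset.1 (mem_filter.1 hU).1)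
  have hmain : |X * ∑ U ∈ Q.powerset with #U < r, (-1) ^ #U * V U - X * ∏ q ∈ Q, (1 - f q)| ≤
      X * ∑ U ∈ Q.powerset with r ≤ #U, V U := by
    rw [← mul_sub, abs_mul, abs_of_nonneg hX]
    exact mul_le_mul_of_nonneg_left (abs_sum_low_sub_prod_one_sub_le hf r) hX
  have hlevel : ∑ U ∈ powersetCard r Q, g U ≤
      X * ∑ U ∈ Q.powerset with r ≤ #U, V U + ∑ U ∈ powersetCard r Q, η U := calc
    _ ≤ ∑ U ∈ powersetCard r Q, (X * V U + η U) := sum_le_sum fun U hU => by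
        linarith [le_of_abs_le (hη U (mem_powersetCard.1 hU).1)]
    _ = X * ∑ U ∈ powersetCard r Q, V U + ∑ U ∈ powersetCard r Q, η U := by
        rw [sum_add_distrib, mul_sum]
    _ ≤ X * ∑ U ∈ Q.powerset with r ≤ #U, V U + ∑ U ∈ powersetCard r Q, η U := by
        refine add_le_add_left (mul_le_mul_of_nonneg_left ?_ hX) _
        refine sum_le_sum_of_subset_of_nonneg (fun U hU => ?_) fun U hU _ => ?_
        · rw [mem_powersetCard] at hU
          simp [hU.1, hU.2]
        · exact prod_nonneg fun q hq => hf q (mem_powerset.1 (mem_filter.1 hU).1 hq)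
  have hsplit : ∑ U ∈ Q.powerset with #U ≤ r, η U =
      ∑ U ∈ Q.powerset with #U < r, η U + ∑ U ∈ powersetCard r Q, η U := by
    simp_rw [powersetCard_eq_filter, le_iff_lt_or_eq]
    rw [filter_or, sum_union (disjoint_filter.2 fun _ _ => LT.lt.ne)]
  rw [abs_le] at *
  constructor <;> linarith

end Bonferroni

section Rankin

open Finset

variable {κ : Type*}

/-- Rankin's trick: `1 ≤ y ^ (#U - r)` for the subsets `U` that are counted. -/
theorem pow_mul_sum_powerset_le_card_prod_le {Q : Finset κ} {f : κ → ℝ} (hf : ∀ q ∈ Q, 0 ≤ f q)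
    {y : ℝ} (hy : 1 ≤ y) (r : ℕ) :
    y ^ r * ∑ U ∈ Q.powerset with r ≤ #U, ∏ q ∈ U, f q ≤ exp (y * ∑ q ∈ Q, f q) := by
  have hU {U : Finset κ} (hU : U ∈ Q.powerset) : 0 ≤ ∏ q ∈ U, f q :=
    prod_nonneg fun q hq => hf q (mem_powerset.1 hU hq)
  have hyf {q : κ} (hq : q ∈ Q) : 0 ≤ y * f q := mul_nonneg (by linarith) (hf q hq)
  calc y ^ r * ∑ U ∈ Q.powerset with r ≤ #U, ∏ q ∈ U, f q
      ≤ ∑ U ∈ Q.powerset with r ≤ #U, ∏ q ∈ U, y * f q := by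
        rw [mul_sum]
        refine sum_le_sum fun U h => ?_
        rw [mem_filter] at h
        rw [prod_mul_distrib, prod_const]
        exact mul_le_mul_of_nonneg_right (pow_le_pow_right₀ hy h.2) (hU h.1)
    _ ≤ ∑ U ∈ Q.powerset, ∏ q ∈ U, y * f q :=
        sum_le_sum_of_subset_of_nonneg (filter_subset _ _) fun U h _ =>
          prod_nonneg fun q hq => hyf (mem_powerset.1 h hq)
    _ = ∏ q ∈ Q, (y * f q + 1) := (prod_add_one Q).symm
    _ ≤ ∏ q ∈ Q, exp (y * f q) :=
        prod_le_prod (fun q hq => by linarith [hyf hq]) fun q _ => add_one_le_exp _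
    _ = exp (y * ∑ q ∈ Q, f q) := by rw [mul_sum, exp_sum]

theorem card_powerset_card_le_le {Q : Finset κ} {w : ℝ} (hw : 1 ≤ w) (hQ : #Q ≤ w) (r : ℕ) :
    (#{U ∈ Q.powerset | #U ≤ r} : ℝ) ≤ exp 1 * w ^ r := by
  have hw0 : 0 < w := by linarith
  rw [← div_le_iff₀ (by positivity), div_eq_mul_inv]
  calc (#{U ∈ Q.powerset | #U ≤ r} : ℝ) * (w ^ r)⁻¹
      = ∑ U ∈ Q.powerset with #U ≤ r, (w ^ r)⁻¹ := by rw [sum_const, nsmul_eq_mul]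
    _ ≤ ∑ U ∈ Q.powerset with #U ≤ r, w⁻¹ ^ #U := sum_le_sum fun U h => by
        rw [inv_pow]
        exact inv_anti₀ (by positivity) (pow_le_pow_right₀ hw (mem_filter.1 h).2)
    _ ≤ ∑ U ∈ Q.powerset, w⁻¹ ^ #U :=
        sum_le_sum_of_subset_of_nonneg (filter_subset _ _) fun _ _ _ => by positivity
    _ = (w⁻¹ + 1) ^ #Q := by simpa using sum_pow_mul_eq_add_pow w⁻¹ 1 Q
    _ ≤ exp w⁻¹ ^ #Q := by
        gcongr
        exact add_one_le_exp _
    _ = exp (#Q * w⁻¹) := (exp_nat_mul _ _).symm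
    _ ≤ exp 1 := by
        rw [exp_le_exp, ← div_eq_mul_inv]
        exact (div_le_one hw0).2 hQ

end Rankin

section Multiples

open Finset

theorem prod_dvd_iff_forall_dvd {Q : Finset ℕ} (hQ : (Q : Set ℕ).Pairwise Nat.Coprime) {m : ℕ} :
    ∏ q ∈ Q, q ∣ m ↔ ∀ q ∈ Q, q ∣ m :=
  ⟨fun h _ hq => (dvd_prod_of_mem _ hq).trans h, prod_dvd_of_isRelPrime fun _ hp _ hq hpq =>
    Nat.coprime_iff_isRelPrime.1 (hQ hp hq hpq)⟩

theorem abs_natCast_div_sub_div_le_one (a b : ℕ) : |((a / b : ℕ) : ℝ) - a / b| ≤ 1 := by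
  rw [← Nat.floor_div_eq_div (K := ℝ)]
  exact Nat.abs_floor_sub_le (by positivity)

theorem card_filter_dvd_and_forall_dvd {n D : ℕ} {Q : Finset ℕ}
    (hQ : (Q : Set ℕ).Pairwise Nat.Coprime) (hDQ : ∀ q ∈ Q, D.Coprime q) :
    #{m ∈ Ioc 0 n | D ∣ m ∧ ∀ q ∈ Q, q ∣ m} = n / (D * ∏ q ∈ Q, q) := by
  rw [← Nat.Ioc_filter_dvd_card_eq_div]
  simp_rw [← prod_dvd_iff_forall_dvd hQ]
  exact congrArg card (filter_congr fun m _ =>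
    ⟨fun h => (Nat.Coprime.prod_right hDQ).mul_dvd_of_dvd_of_dvd h.1 h.2,
      fun h => ⟨(dvd_mul_right _ _).trans h, (dvd_mul_left _ _).trans h⟩⟩)

theorem abs_card_filter_dvd_and_forall_not_dvd_sub_le {n D : ℕ} {Q : Finset ℕ}
    (hQ : (Q : Set ℕ).Pairwise Nat.Coprime) (hDQ : ∀ q ∈ Q, D.Coprime q) {w y : ℝ} (hw : 1 ≤ w)
    (hQw : #Q ≤ w) (hy : 1 ≤ y) (r : ℕ) :
    |(#{m ∈ Ioc 0 n | D ∣ m ∧ ∀ q ∈ Q, ¬ q ∣ m} : ℝ) - n / D * ∏ q ∈ Q, (1 - (q : ℝ)⁻¹)| ≤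
      2 * (n / D * (exp (y * ∑ q ∈ Q, (q : ℝ)⁻¹) / y ^ r)) + exp 1 * w ^ r := by
  have hdensity : ∀ U ⊆ Q, |∑ m ∈ {m ∈ Ioc 0 n | D ∣ m} with ∀ q ∈ U, q ∣ m, (1 : ℝ) -
      n / D * ∏ q ∈ U, (q : ℝ)⁻¹| ≤ 1 := by
    intro U hU
    rw [sum_const, nsmul_one, filter_filter,
      card_filter_dvd_and_forall_dvd (hQ.mono (coe_subset.2 hU)) fun q hq => hDQ q (hU hq),
      prod_inv_distrib, ← div_eq_mul_inv, div_div]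
    simpa only [Nat.cast_mul, Nat.cast_prod] using
      abs_natCast_div_sub_div_le_one n (D * ∏ q ∈ U, q)
  have hsieve := abs_sum_filter_forall_not_sub_mul_prod_le (fun _ _ => zero_le_one)
    (by positivity : (0 : ℝ) ≤ n / D) (fun q _ => by positivity) hdensity r
  simp only [sum_const, nsmul_one, filter_filter] at hsieve
  refine hsieve.trans ?_
  gcongr
  · rw [le_div_iff₀' (by positivity)]
    exact pow_mul_sum_powerset_le_card_prod_le (fun q _ => by positivity) hy r
  · exact card_powerset_card_le_le hw hQw r

end Multiples

section Primes

open Finset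

theorem card_primes_Ico_mul_log_le (N M : ℕ) :
    #{p ∈ Ico N M | p.Prime} * log N ≤ log 4 * M := calc
  #{p ∈ Ico N M | p.Prime} * log N = ∑ p ∈ Ico N M with p.Prime, log N := by
      rw [sum_const, nsmul_eq_mul]
  _ ≤ ∑ p ∈ Ico N M with p.Prime, log p := sum_le_sum fun p hp => by
      obtain ⟨hp, -⟩ := mem_filter.1 hp
      rcases N.eq_zero_or_pos with rfl | hN
      · simpa using log_natCast_nonneg p
      · gcongr
        exact (mem_Ico.1 hp).1
  _ ≤ ∑ p ∈ M.primesLE, log p :=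
      sum_le_sum_of_subset_of_nonneg
        (fun p hp => by
          rw [mem_filter, mem_Ico] at hp
          exact Nat.mem_primesLE.2 ⟨hp.1.2.le, hp.2⟩)
        fun p _ _ => log_natCast_nonneg p
  _ = Chebyshev.theta M := (Chebyshev.theta_eq_sum_primesLE_log M).symm
  _ ≤ log 4 * M := Chebyshev.theta_le_log4_mul_x M.cast_nonneg

theorem sum_inv_primes_Ico_le {N M : ℕ} (hN : 2 ≤ N) :
    ∑ p ∈ Ico N M with p.Prime, (p : ℝ)⁻¹ ≤ log 4 * M / (N * log N) := by
  have hlog : 0 < log N := log_pos (by exact_mod_cast hN)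
  calc ∑ p ∈ Ico N M with p.Prime, (p : ℝ)⁻¹
      ≤ ∑ p ∈ Ico N M with p.Prime, (N : ℝ)⁻¹ := sum_le_sum fun p hp => by
        gcongr
        exact (mem_Ico.1 (mem_filter.1 hp).1).1
    _ = #{p ∈ Ico N M | p.Prime} * log N / (N * log N) := by
        rw [sum_const, nsmul_eq_mul]
        field_simp
    _ ≤ log 4 * M / (N * log N) :=
        div_le_div_of_nonneg_right (card_primes_Ico_mul_log_le N M) (by positivity)

theorem sum_inv_primesBelow_two_pow_le (J : ℕ) :
    ∑ p ∈ Nat.primesBelow (2 ^ (J + 1)), (p : ℝ)⁻¹ ≤ 4 * harmonic J := by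
  induction J with
  | zero => simp
  | succ J ih =>
    have hsplit : ∑ p ∈ Nat.primesBelow (2 ^ (J + 2)), (p : ℝ)⁻¹ =
        ∑ p ∈ Nat.primesBelow (2 ^ (J + 1)), (p : ℝ)⁻¹ +
          ∑ p ∈ Ico (2 ^ (J + 1) : ℕ) (2 ^ (J + 2)) with p.Prime, (p : ℝ)⁻¹ := by
      simp_rw [Nat.primesBelow_eq_filter_Ico_zero, sum_filter]
      rw [sum_Ico_consecutive _ (Nat.zero_le _) (Nat.pow_le_pow_right two_pos (by lia))]
    have hblock : ∑ p ∈ Ico (2 ^ (J + 1) : ℕ) (2 ^ (J + 2)) with p.Prime, (p : ℝ)⁻¹ ≤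
        4 * ((J : ℝ) + 1)⁻¹ := by
      refine (sum_inv_primes_Ico_le (Nat.le_self_pow J.succ_ne_zero 2)).trans_eq ?_
      rw [show (4 : ℝ) = 2 ^ 2 by norm_num]
      push_cast
      rw [log_pow, log_pow, pow_succ (2 : ℝ) (J + 1)]
      have := log_pos one_lt_two
      push_cast
      field_simp
    rw [hsplit, harmonic_succ]
    push_cast
    linarith

theorem sum_inv_primesLE_floor_le {w : ℝ} (hw : 2 ≤ w) :
    ∑ p ∈ ⌊w⌋₊.primesLE, (p : ℝ)⁻¹ ≤ 4 + 4 * log (2 * log w) := by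
  set J := Nat.log 2 ⌊w⌋₊
  have hJ : 1 ≤ J := Nat.log_pos one_lt_two (Nat.le_floor (by exact_mod_cast hw))
  have hJw : (J : ℝ) ≤ 2 * log w := by
    have hpow : (2 : ℝ) ^ J ≤ w := by
      have h := Nat.pow_log_le_self 2 (Nat.floor_pos.2 (by linarith : 1 ≤ w)).ne'
      exact_mod_cast (Nat.le_floor_iff (by linarith)).1 h
    have hlog := log_le_log (by positivity) hpow
    rw [log_pow] at hlog
    nlinarith [log_two_gt_d9, (J.cast_nonneg : (0 : ℝ) ≤ J)]
  calc ∑ p ∈ ⌊w⌋₊.primesLE, (p : ℝ)⁻¹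
      ≤ ∑ p ∈ Nat.primesBelow (2 ^ (J + 1)), (p : ℝ)⁻¹ :=
        sum_le_sum_of_subset_of_nonneg
          (Nat.primesBelow_mono (Nat.lt_pow_succ_log_self one_lt_two _))
          fun _ _ _ => by positivity
    _ ≤ 4 * harmonic J := sum_inv_primesBelow_two_pow_le J
    _ ≤ 4 * (1 + log J) := by
        gcongr
        exact harmonic_le_one_add_log J
    _ ≤ 4 * (1 + log (2 * log w)) := by gcongr
    _ = 4 + 4 * log (2 * log w) := by ring

theorem exp_neg_two_mul_le_one_sub {x : ℝ} (hx0 : 0 ≤ x) (hx : x ≤ 1 / 2) :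
    exp (-(2 * x)) ≤ 1 - x := by
  rw [exp_neg]
  refine inv_le_of_inv_le₀ (by linarith) (le_trans ?_ (add_one_le_exp (2 * x)))
  rw [inv_le_iff_one_le_mul₀ (by linarith)]
  nlinarith

theorem exp_neg_two_mul_sum_inv_le_prod_one_sub_inv {Q : Finset ℕ} (hQ : ∀ q ∈ Q, 2 ≤ q) :
    exp (-(2 * ∑ q ∈ Q, (q : ℝ)⁻¹)) ≤ ∏ q ∈ Q, (1 - (q : ℝ)⁻¹) := by
  rw [mul_sum, ← sum_neg_distrib, exp_sum]
  refine prod_le_prod (fun _ _ => (exp_pos _).le) fun q hq => ?_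
  refine exp_neg_two_mul_le_one_sub (by positivity) ?_
  rw [one_div]
  gcongr
  exact_mod_cast hQ q hq

end Primes

section Estimates

theorem exp_mul_le_sqrt_pow_ceil {k c : ℝ} (hk : 1 ≤ k) :
    exp (c / 2 * (k * log k)) ≤ √k ^ ⌈c * k⌉₊ := by
  have hk0 : 0 < k := by linarith
  rw [← exp_log (sqrt_pos.2 hk0), ← exp_nat_mul, log_sqrt hk0.le, exp_le_exp]
  have := mul_le_mul_of_nonneg_right (Nat.le_ceil (c * k)) (log_nonneg hk)
  linarith

theorem four_mul_exp_sqrt_mul_div_sqrt_pow_le {k σ : ℝ} (hk : 32 ≤ k) (hσ : σ ≤ 4 + 8 * log k) :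
    4 * (exp (√k * σ) / √k ^ ⌈16 * k⌉₊) ≤ exp (-(2 * (k * log k))) * exp (-(2 * σ)) := by
  have hlog : 1 ≤ log k := by
    rw [le_log_iff_exp_le (by linarith)]
    linarith [exp_one_lt_d9]
  have hsqrt : √k ≤ k / 5 := by
    rw [sqrt_le_left (by linarith)]
    nlinarith
  have hexp : 2 + (√k + 2) * σ ≤ 6 * (k * log k) := calc
    2 + (√k + 2) * σ ≤ 2 + (√k + 2) * (12 * log k) := by
        gcongr
        linarith
    _ ≤ 2 + (k / 5 + 2) * (12 * log k) := by gcongr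
    _ ≤ 6 * (k * log k) := by nlinarith
  calc 4 * (exp (√k * σ) / √k ^ ⌈16 * k⌉₊)
      ≤ exp 2 * (exp (√k * σ) / exp (16 / 2 * (k * log k))) := by
        gcongr
        · linarith [quadratic_le_exp_of_nonneg zero_le_two]
        · exact exp_mul_le_sqrt_pow_ceil (by linarith)
    _ = exp (2 + √k * σ - 8 * (k * log k)) := by
        rw [← exp_sub, ← exp_add]
        ring_nf
    _ ≤ exp (-(2 * (k * log k)) + -(2 * σ)) := by
        gcongr
        linarith
    _ = _ := exp_add _ _

theorem eventually_log_le_mul_sqrt_div_log {c : ℝ} (hc : 0 < c) :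
    ∀ᶠ x in atTop, log x ≤ c * √(x / log x) := by
  filter_upwards [(isLittleO_pow_log_id_atTop (n := 3)).bound (by positivity : 0 < c ^ 2),
    eventually_gt_atTop 1] with x hx hx1
  have hlog : 0 < log x := log_pos hx1
  rw [norm_of_nonneg (by positivity), id, norm_of_nonneg (by linarith)] at hx
  rw [← div_le_iff₀' hc]
  apply le_sqrt_of_sq_le
  rw [le_div_iff₀ hlog, div_pow, div_mul_eq_mul_div, div_le_iff₀' (by positivity), ← pow_succ]
  exact hx

end Estimates

section Parameters

open Finset

/-- The range of `n` in which the parameters `k` and `log log n` are large enough for the sieve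
estimates. -/
structure SieveRange (n : ℕ) : Prop where
  le_kp : 32 ≤ kp n
  one_le_log_log : 1 ≤ log (log n)
  log_log_le_kp : log (log n) ≤ kp n

theorem eventually_sieveRange : ∀ᶠ n in atTop, SieveRange n := by
  have hlog : Tendsto (fun n : ℕ => log n) atTop atTop :=
    tendsto_log_atTop.comp tendsto_natCast_atTop_atTop
  have hlogsqrt := eventually_log_le_mul_sqrt_div_log (c := 2 ^ (-5 : ℤ)) (by positivity)
  filter_upwards [hlog.eventually hlogsqrt, (tendsto_log_atTop.comp hlog).eventually_ge_atTop 32]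
    with n hkp (hloglog : 32 ≤ log (log n))
  exact ⟨hloglog.trans hkp, by linarith, hkp⟩

theorem ap_sq (n : ℕ) : ap n ^ 2 = exp (-(2 * (kp n * log (kp n)))) := by
  rw [ap, ← exp_nat_mul]
  congr 1
  push_cast
  ring

theorem coe_primesLE_floor_Wp (n : ℕ) : (⌊Wp n⌋₊.primesLE : Set ℕ) = primesLe n := by
  ext p
  simp [primesLe, Nat.mem_primesLE, Nat.le_floor_iff (exp_pos _).le, and_comm, Wp]

theorem ASet_coe_eq_coe_filter {n : ℕ} {T : Finset ℕ} (hT : T ⊆ ⌊Wp n⌋₊.primesLE) :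
    ASet n T = ({m ∈ Ioc 0 n | ∏ p ∈ T, p ∣ m ∧ ∀ q ∈ ⌊Wp n⌋₊.primesLE \ T, ¬ q ∣ m} :
      Finset ℕ) := by
  have hcoprime : (T : Set ℕ).Pairwise Nat.Coprime := fun p hp q hq =>
    (Nat.coprime_primes (Nat.prime_of_mem_primesLE (hT hp)) (Nat.prime_of_mem_primesLE (hT hq))).2
  ext m
  simp only [ASet, ← coe_primesLE_floor_Wp, prod_dvd_iff_forall_dvd hcoprime, Set.mem_ofPred_eq,
    coe_filter, mem_Ioc, mem_coe, Finset.mem_sdiff]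
  grind

namespace SieveRange

variable {n : ℕ}

theorem log_pos (h : SieveRange n) : 0 < log n := by
  refine (log_natCast_nonneg n).lt_of_ne' fun h0 => ?_
  have := h.one_le_log_log
  rw [h0, log_zero] at this
  linarith

theorem log_eq (h : SieveRange n) : log n = 1024 * (kp n ^ 2 * log (log n)) := by
  have hloglog := h.one_le_log_log
  have hkp : √(log n / log (log n)) = 32 * kp n := by
    rw [kp]
    norm_num
    ring
  have hsq := sq_sqrt (div_nonneg h.log_pos.le (by linarith : 0 ≤ log (log n)))
  rw [hkp, eq_div_iff (by linarith)] at hsq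
  linarith

theorem natCast_eq_exp (h : SieveRange n) :
    (n : ℝ) = exp (1024 * (kp n ^ 2 * log (log n))) := by
  rw [← h.log_eq, exp_log]
  exact one_pos.trans ((log_pos_iff n.cast_nonneg).1 h.log_pos)

theorem Wp_eq (h : SieveRange n) : Wp n = exp (kp n * log (log n) / 32) := by
  have hk := h.le_kp
  have hloglog := h.one_le_log_log
  have hsq : log n * log (log n) = (32 * (kp n * log (log n))) ^ 2 := by
    nth_rw 1 [h.log_eq]
    ring
  rw [Wp, hsq, sqrt_sq (by positivity)]
  norm_num
  ring

theorem two_le_Wp (h : SieveRange n) : 2 ≤ Wp n := by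
  have hexp := add_one_le_exp (kp n * log (log n) / 32)
  rw [h.Wp_eq]
  nlinarith [h.le_kp, h.one_le_log_log]

theorem sum_inv_primesLE_Wp_le (h : SieveRange n) :
    ∑ p ∈ ⌊Wp n⌋₊.primesLE, (p : ℝ)⁻¹ ≤ 4 + 8 * log (kp n) := by
  have hk := h.le_kp
  have hloglog := h.one_le_log_log
  have hlogWp : log (2 * log (Wp n)) ≤ log (kp n ^ 2) := by
    rw [h.Wp_eq, log_exp]
    gcongr
    nlinarith [h.log_log_le_kp]
  rw [log_pow] at hlogWp
  push_cast at hlogWp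
  linarith [sum_inv_primesLE_floor_le h.two_le_Wp]

theorem two_mul_exp_one_mul_Wp_pow_le (h : SieveRange n) {D σ : ℝ} (hD0 : 0 < D)
    (hD : D ≤ Wp n ^ kp n) (hσ : σ ≤ 4 + 8 * log (kp n)) :
    2 * (exp 1 * Wp n ^ ⌈16 * kp n⌉₊) ≤ n / D * (ap n ^ 2 * exp (-(2 * σ))) := by
  have hk := h.le_kp
  have hloglog := h.one_le_log_log
  set k := kp n
  set l := log (log n)
  have hceil : (⌈16 * k⌉₊ : ℝ) ≤ 16 * k + 1 := (Nat.ceil_lt_add_one (by linarith)).le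
  have hlogk : log k ≤ k := log_le_self (by linarith)
  have hexp : 2 + (16 * k + 1) * (k * l / 32) ≤
      1024 * (k ^ 2 * l) - k * l / 32 * k + (-(2 * (k * log k)) + -(2 * σ)) := by
    have hkl : 32 ≤ k * l := by nlinarith
    have hlogkl : log k ≤ k * l := by nlinarith
    have hmul : 32 * (k * l) ≤ k ^ 2 * l := by nlinarith
    have hklog : k * log k ≤ k ^ 2 * l := by nlinarith
    linarith
  calc 2 * (exp 1 * Wp n ^ ⌈16 * k⌉₊)
      ≤ exp 1 * (exp 1 * exp ((16 * k + 1) * (k * l / 32))) := by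
        rw [h.Wp_eq, ← exp_nat_mul]
        gcongr
        linarith [add_one_le_exp (1 : ℝ)]
    _ = exp (2 + (16 * k + 1) * (k * l / 32)) := by
        rw [← exp_add, ← exp_add]
        ring_nf
    _ ≤ exp (1024 * (k ^ 2 * l) - k * l / 32 * k + (-(2 * (k * log k)) + -(2 * σ))) := by
        gcongr
    _ = n / Wp n ^ k * (ap n ^ 2 * exp (-(2 * σ))) := by
        rw [exp_add, exp_sub, exp_add, h.natCast_eq_exp, h.Wp_eq, ← exp_mul, ap_sq]
    _ ≤ n / D * (ap n ^ 2 * exp (-(2 * σ))) := by gcongr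

theorem abs_card_sifted_sub_le (h : SieveRange n) {Q : Finset ℕ} (hQ : Q ⊆ ⌊Wp n⌋₊.primesLE)
    {D : ℕ} (hD0 : 0 < D) (hD : D ≤ Wp n ^ kp n) (hDQ : ∀ q ∈ Q, D.Coprime q) :
    |(#{m ∈ Ioc 0 n | D ∣ m ∧ ∀ q ∈ Q, ¬ q ∣ m} : ℝ) - n / D * ∏ q ∈ Q, (1 - (q : ℝ)⁻¹)| ≤
      ap n ^ 2 * (n / D * ∏ q ∈ Q, (1 - (q : ℝ)⁻¹)) := by
  have hprime {q : ℕ} (hq : q ∈ Q) : q.Prime := Nat.prime_of_mem_primesLE (hQ hq)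
  have hcard : (#Q : ℝ) ≤ Wp n := calc
    (#Q : ℝ) ≤ ⌊Wp n⌋₊ := by
      rw [Nat.primesLE_eq_filter_Ioc_zero] at hQ
      exact_mod_cast (card_le_card (hQ.trans (filter_subset _ _))).trans_eq
        (Nat.card_Ioc _ _)
    _ ≤ Wp n := Nat.floor_le (exp_pos _).le
  set σ := ∑ q ∈ Q, (q : ℝ)⁻¹
  have hσ : σ ≤ 4 + 8 * log (kp n) :=
    (sum_le_sum_of_subset_of_nonneg hQ fun _ _ _ => by positivity).trans
      h.sum_inv_primesLE_Wp_le
  have hsieve := abs_card_filter_dvd_and_forall_not_dvd_sub_le (n := n) (y := √(kp n))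
    (fun p hp q hq => (Nat.coprime_primes (hprime hp) (hprime hq)).2) hDQ
    (by linarith [h.two_le_Wp]) hcard (one_le_sqrt.2 (by linarith [h.le_kp])) ⌈16 * kp n⌉₊
  have htail : 4 * (n / D * (exp (√(kp n) * σ) / √(kp n) ^ ⌈16 * kp n⌉₊)) ≤
      n / D * (ap n ^ 2 * exp (-(2 * σ))) := by
    rw [mul_left_comm, ap_sq]
    exact mul_le_mul_of_nonneg_left (four_mul_exp_sqrt_mul_div_sqrt_pow_le h.le_kp hσ)
      (by positivity)
  have hround := h.two_mul_exp_one_mul_Wp_pow_le (Nat.cast_pos.2 hD0) hD hσ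
  have hprod : n / D * (ap n ^ 2 * exp (-(2 * σ))) ≤
      n / D * (ap n ^ 2 * ∏ q ∈ Q, (1 - (q : ℝ)⁻¹)) := by
    gcongr
    exact exp_neg_two_mul_sum_inv_le_prod_one_sub_inv fun q hq => (hprime hq).two_le
  linarith [mul_left_comm (ap n ^ 2) ((n : ℝ) / D) (∏ q ∈ Q, (1 - (q : ℝ)⁻¹))]

theorem abs_ncard_ASet_sub_le (h : SieveRange n) {S : Set ℕ} (hS : S ⊆ primesLe n)
    (hSk : S.ncard < kp n) :
    |((ASet n S).ncard : ℝ) - n * (∏ᶠ p ∈ S, (p : ℝ)⁻¹) * ∏ᶠ p ∈ primesLe n \ S, (1 - (p : ℝ)⁻¹)| ≤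
      ap n ^ 2 * (n * (∏ᶠ p ∈ S, (p : ℝ)⁻¹) * ∏ᶠ p ∈ primesLe n \ S, (1 - (p : ℝ)⁻¹)) := by
  rw [← coe_primesLE_floor_Wp] at hS ⊢
  lift S to Finset ℕ using (finite_toSet _).subset hS with T
  rw [coe_subset] at hS
  rw [Set.ncard_coe_finset] at hSk
  have hprime {p : ℕ} (hp : p ∈ ⌊Wp n⌋₊.primesLE) : p.Prime := Nat.prime_of_mem_primesLE hp
  have hD : ((∏ p ∈ T, p : ℕ) : ℝ) ≤ Wp n ^ kp n := calc
    ((∏ p ∈ T, p : ℕ) : ℝ) = ∏ p ∈ T, (p : ℝ) := Nat.cast_prod _ _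
    _ ≤ ∏ _ ∈ T, Wp n := prod_le_prod (fun _ _ => Nat.cast_nonneg _) fun _ hp =>
      (Nat.le_floor_iff (exp_pos _).le).1 (Nat.le_of_mem_primesLE (hS hp))
    _ = Wp n ^ (#T : ℝ) := by rw [prod_const, rpow_natCast]
    _ ≤ Wp n ^ kp n := rpow_le_rpow_of_exponent_le (by linarith [h.two_le_Wp]) hSk.le
  have hcoprime : ∀ q ∈ ⌊Wp n⌋₊.primesLE \ T, (∏ p ∈ T, p).Coprime q := fun q hq => by
    rw [Finset.mem_sdiff] at hq
    exact Nat.Coprime.prod_left fun _ hp =>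
      (Nat.coprime_primes (hprime (hS hp)) (hprime hq.1)).2 fun hpq => hq.2 (hpq ▸ hp)
  have hsifted := h.abs_card_sifted_sub_le sdiff_subset
    (prod_pos fun _ hp => (hprime (hS hp)).pos) hD hcoprime
  rw [ASet_coe_eq_coe_filter hS, Set.ncard_coe_finset, finprod_mem_coe_finset, ← coe_sdiff,
    finprod_mem_coe_finset, prod_inv_distrib, ← div_eq_mul_inv]
  simpa only [Nat.cast_prod] using hsifted

end SieveRange

end Parameters

/-- For all sufficiently large `n` and all `S ⊆ 𝒫_W` with `|S| < k`,
`|A_S| = (1 ± α²) · n · ∏_{p ∈ S} p⁻¹ · ∏_{p ∈ 𝒫_W \ S} (1 − p⁻¹)`. -/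
theorem ASet_ncard_asymptotic :
    ∃ N : ℕ, ∀ n : ℕ, N ≤ n → ∀ S : Set ℕ, S ⊆ primesLe n → (S.ncard : ℝ) < kp n →
      (1 - ap n ^ 2) *
          ((n : ℝ) * (∏ᶠ p ∈ S, ((p : ℝ))⁻¹) * ∏ᶠ p ∈ primesLe n \ S, (1 - (p : ℝ)⁻¹))
        ≤ ((ASet n S).ncard : ℝ) ∧
      ((ASet n S).ncard : ℝ) ≤
        (1 + ap n ^ 2) *
          ((n : ℝ) * (∏ᶠ p ∈ S, ((p : ℝ))⁻¹) * ∏ᶠ p ∈ primesLe n \ S, (1 - (p : ℝ)⁻¹)) := by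
  obtain ⟨N, hN⟩ := eventually_atTop.1 eventually_sieveRange
  refine ⟨N, fun n hn S hS hSk => ?_⟩
  have h := abs_le.1 ((hN n hn).abs_ncard_ASet_sub_le hS hSk)
  constructor <;> linarith [h.1, h.2]
end
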